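/- arXiv:2509.00302 — 2 statements merged into one kernel-verified Lean document; each statement's English description precedes it below -/
import Mathlib

section
/- Let g ≥ 2 be an integer, let Q be an odd prime power with Q ≡ −1 (mod 2g+1), let s be a positive integer, and let q = Q^{2s}. Let g' be an integer with −(g−1) ≤ g' ≤ g−1, set r = g+1−g' and δ = g+1+g'. Then for all integers t, m with 1 ≤ t < m ≤ ⌊(q + 2gQ^{s})/(2g+1)⌋, there exists an (r, δ)-LRC over F_q of length m(2g+1), dimension tr+1, and minimum distance at least (m−t)(2g+1) + min{0, 2g'+1}. In particular, if 0 ≤ g' ≤ g−1, there exists an optimal (r, δ)-LRC over F_q with parameters [m(2g+1), tr+1, (m−t)(2g+1)]_q. -/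
/-- The Hamming weight of a vector: the number of nonzero coordinates. -/
def hammingWt {F : Type*} [Zero F] [DecidableEq F] {n : ℕ} (v : Fin n → F) : ℕ :=
  (Finset.univ.filter (fun i => v i ≠ 0)).card

/-- The minimum distance of the linear code `C` is at least `d`. -/
def MinDistGe {F : Type*} [Field F] [DecidableEq F] {n : ℕ}
    (C : Submodule F (Fin n → F)) (d : ℕ) : Prop :=
  ∀ c ∈ C, c ≠ 0 → d ≤ hammingWt c

/-- The minimum distance of the linear code `C` is exactly `d`. -/
def MinDistEq {F : Type*} [Field F] [DecidableEq F] {n : ℕ}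
    (C : Submodule F (Fin n → F)) (d : ℕ) : Prop :=
  MinDistGe C d ∧ ∃ c ∈ C, c ≠ 0 ∧ hammingWt c = d

/-- `C` is an `(r, δ)`-locally repairable code: every coordinate `i` has a repair
group `R` containing `i`, of size at most `r + δ - 1`, such that the punctured code
`C|_R` has minimum distance at least `δ` (i.e. every codeword whose restriction to
`R` is nonzero has at least `δ` nonzero coordinates inside `R`). -/
def IsLRC {F : Type*} [Field F] [DecidableEq F] {n : ℕ}
    (C : Submodule F (Fin n → F)) (r δ : ℕ) : Prop :=
  ∀ i : Fin n, ∃ R : Finset (Fin n), i ∈ R ∧ R.card ≤ r + δ - 1 ∧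
    ∀ c ∈ C, (∃ j ∈ R, c j ≠ 0) → δ ≤ (R.filter (fun j => c j ≠ 0)).card

/-- The parameters `[n, k, d]` attain the Singleton-type bound for `(r, δ)`-LRCs:
`d = n - k + 1 - (⌈k/r⌉ - 1)(δ - 1)`  (here `⌈k/r⌉ = (k + r - 1)/r`). -/
def SingletonOptimal (n k d r δ : ℕ) : Prop :=
  (d : ℤ) = (n : ℤ) - (k : ℤ) + 1 - ((((k + r - 1) / r : ℕ) : ℤ) - 1) * ((δ : ℤ) - 1)

/-- There exists an optimal `(r, δ)`-LRC over `F` with parameters `[n, k, d]`. -/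
def ExistsOptimalLRC (F : Type*) [Field F] [DecidableEq F] (n k d r δ : ℕ) : Prop :=
  ∃ C : Submodule F (Fin n → F),
    Module.finrank F C = k ∧ MinDistEq C d ∧ IsLRC C r δ ∧ SingletonOptimal n k d r δ

/-! Write `n = 2g + 1`. Expanding `∑ₓ η(1 + b xⁿ)`, with `η` the quadratic character, along the
characters `χ` of order dividing `n` gives twisted Jacobi sums `J(χ, η)`. As `n` divides `Q + 1`,
raising to a suitable power of the characteristic inverts both `χ` and `η`, and Frobenius turns this
into `J(χ, η)² = J(χ, η) J(χ⁻¹, η⁻¹) = q`. Hence the sum is `e Q ^ s` for an integer `e` with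
`|e| ≤ n - 1`. All these sums are `1` modulo `n`, and `Q ^ s ≡ ±1`; if `|e| < n - 1` for every
`b ≠ 0`, then `e = ±1` would not depend on `b`, although the sums over `b ≠ 0` add up to zero. A
quadratic twist makes an extremal sum positive and yields a curve `y² = a xⁿ + c` with
`q + 2g Q ^ s` affine points. At most two of them have `y² = c`; the others fall into fibres of `y`
of size exactly `n`.

The code evaluates `xᵃ yᵇ` (`a < r`, `b < t`) and `yᵗ` on `m` such fibres, which serve as repair
groups: on each of them a codeword is a polynomial in `x` of degree less than `r`. A function
`A + By` has at most `deg (A² - B²P)` zeros on `y² = P(x)`, that is, at most its pole order at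
infinity. When `g' ≥ 0` the largest pole order is that of `yᵗ`, and `∏ (y - yⱼ)` over `t` of the
fibres attains the resulting bound. -/

section PowerCharacterSums

open Finset Polynomial

variable {F R : Type*} [Field F] [CommRing R]

theorem mulChar_apply_eq_one_iff_exists_pow_orderOf [Finite F] (χ : MulChar F R) {z : F}
    (hz : z ≠ 0) :
    χ z = 1 ↔ ∃ x, x ^ orderOf χ = z := by
  constructor
  · intro hχz
    obtain ⟨γ, hγ⟩ := IsCyclic.exists_generator (α := Fˣ)
    obtain ⟨i, hi : γ ^ i = Units.mk0 z hz⟩ := mem_powers_iff_mem_zpowers.mpr (hγ (Units.mk0 z hz))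
    have hzγ : z = (γ : F) ^ i := by rw [← Units.val_pow_eq_pow_val, hi, Units.val_mk0]
    have hχi : χ ^ i = 1 := by
      rw [MulChar.eq_iff hγ, MulChar.pow_apply_coe, ← map_pow, ← hzγ, hχz, MulChar.one_apply_coe]
    obtain ⟨k, rfl⟩ := orderOf_dvd_of_pow_eq_one hχi
    exact ⟨(γ : F) ^ k, by rw [hzγ, ← pow_mul, mul_comm]⟩
  · rintro ⟨x, rfl⟩
    have hx : x ≠ 0 := ne_zero_pow χ.orderOf_pos.ne' hz
    rw [map_pow, ← MulChar.pow_apply' _ χ.orderOf_pos.ne', pow_orderOf_eq_one,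
      MulChar.one_apply hx.isUnit]

variable [Fintype F]

theorem exists_isPrimitiveRoot_of_dvd_card_sub_one {n : ℕ} (hn : n ∣ Fintype.card F - 1) :
    ∃ ζ : F, IsPrimitiveRoot ζ n := by
  classical
  obtain ⟨γ, hγ⟩ := IsCyclic.exists_ofOrder_eq_natCard (α := Fˣ)
  rw [Nat.card_eq_fintype_card, Fintype.card_units] at hγ
  obtain ⟨k, hk⟩ := hn
  have hprim : IsPrimitiveRoot γ (Fintype.card F - 1) := hγ ▸ IsPrimitiveRoot.orderOf γ
  have hpow : IsPrimitiveRoot (γ ^ k) n :=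
    hprim.pow (Nat.sub_pos_of_lt Fintype.one_lt_card) (by rw [hk, mul_comm])
  exact ⟨_, IsPrimitiveRoot.coe_units_iff.mpr hpow⟩

theorem card_filter_pow_eq_pow [DecidableEq F] {n : ℕ} (hn : n ∣ Fintype.card F - 1) {x₀ : F}
    (hx₀ : x₀ ≠ 0) :
    #{x | x ^ n = x₀ ^ n} = n := by
  obtain ⟨ζ, hζ⟩ := exists_isPrimitiveRoot_of_dvd_card_sub_one hn
  have hn₀ : 0 < n := Nat.pos_of_dvd_of_pos hn (Nat.sub_pos_of_lt Fintype.one_lt_card)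
  have hcard := hζ.card_nthRoots (x₀ ^ n)
  rw [if_pos ⟨x₀, rfl⟩, ← Multiset.toFinset_card_of_nodup (hζ.nthRoots_nodup (pow_ne_zero n hx₀))]
    at hcard
  convert hcard using 2
  ext x
  simp [mem_nthRoots hn₀]

theorem card_filter_pow_eq_zero_or_eq [DecidableEq F] {n : ℕ} (hn : n ∣ Fintype.card F - 1)
    {z : F} (hz : z ≠ 0) :
    #{x | x ^ n = z} = 0 ∨ #{x | x ^ n = z} = n := by
  have hn₀ : n ≠ 0 := ne_zero_of_dvd_ne_zero (Nat.sub_pos_of_lt Fintype.one_lt_card).ne' hn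
  by_cases h : ∃ x₀, x₀ ^ n = z
  · obtain ⟨x₀, rfl⟩ := h
    exact .inr (card_filter_pow_eq_pow hn (ne_zero_pow hn₀ hz))
  · exact .inl (card_filter_eq_zero_iff.mpr fun x _ hx => h ⟨x, hx⟩)

theorem sum_comp_pow [DecidableEq F] {M : Type*} [AddCommMonoid M] {n : ℕ} (hn : n ≠ 0)
    (f : F → M) :
    ∑ x, f (x ^ n) = f 0 + ∑ z ∈ {0}ᶜ, #{x | x ^ n = z} • f z := by
  have hfibre : ∀ z, ∑ x with x ^ n = z, f (x ^ n) = #{x | x ^ n = z} • f z := fun z =>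
    sum_eq_card_nsmul fun x hx => by rw [(mem_filter.mp hx).2]
  have hzero : #{x : F | x ^ n = 0} = 1 := by
    simp only [pow_eq_zero_iff hn, filter_eq', mem_univ, if_true, card_singleton]
  rw [← sum_fiberwise univ (· ^ n), sum_congr rfl fun z _ => hfibre z,
    Fintype.sum_eq_add_sum_compl 0, hzero, one_smul]

theorem sum_range_orderOf_pow_apply [DecidableEq F] [IsDomain R] (χ : MulChar F R) {z : F}
    (hz : z ≠ 0) :
    ∑ j ∈ range (orderOf χ), (χ ^ j) z = #{x | x ^ orderOf χ = z} := by
  have hpow : ∀ j, (χ ^ j) z = χ z ^ j := fun j => χ.pow_apply_coe j (Units.mk0 z hz)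
  simp_rw [hpow]
  by_cases h : ∃ x, x ^ orderOf χ = z
  · rw [(mulChar_apply_eq_one_iff_exists_pow_orderOf χ hz).mpr h]
    obtain ⟨x, rfl⟩ := h
    rw [card_filter_pow_eq_pow χ.orderOf_dvd_card_sub_one (ne_zero_pow χ.orderOf_pos.ne' hz)]
    simp
  · have hχz : χ z - 1 ≠ 0 :=
      sub_ne_zero.mpr (mt (mulChar_apply_eq_one_iff_exists_pow_orderOf χ hz).mp h)
    have hgeom : (∑ j ∈ range (orderOf χ), χ z ^ j) * (χ z - 1) = 0 := by
      rw [geom_sum_mul, ← hpow, pow_orderOf_eq_one, MulChar.one_apply hz.isUnit, sub_self]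
    rw [(mul_eq_zero.mp hgeom).resolve_right hχz,
      card_filter_eq_zero_iff.mpr fun x _ hx => h ⟨x, hx⟩, Nat.cast_zero]

theorem sum_mul_apply_one_add_mul (χ η : MulChar F R) {b : F} (hb : b ≠ 0) :
    ∑ z, χ z * η (1 + b * z) = χ (-b⁻¹) * jacobiSum χ η := by
  rw [jacobiSum, mul_sum,
    ← Equiv.sum_comp (Equiv.mulLeft₀ (-b⁻¹) (neg_ne_zero.mpr (inv_ne_zero hb)))]
  refine sum_congr rfl fun z _ => ?_
  have harg : 1 + b * (-b⁻¹ * z) = 1 - z := by field_simp; ring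
  rw [Equiv.mulLeft₀_apply, harg, map_mul, mul_assoc]

theorem sum_apply_one_add_mul_pow [IsDomain R] (χ : MulChar F R) {η : MulChar F R} (hη : η ≠ 1)
    {b : F} (hb : b ≠ 0) :
    ∑ x, η (1 + b * x ^ orderOf χ) =
      ∑ j ∈ Ico 1 (orderOf χ), (χ ^ j) (-b⁻¹) * jacobiSum (χ ^ j) η := by
  classical
  have hsum : ∑ z ∈ {0}ᶜ, #{x | x ^ orderOf χ = z} • η (1 + b * z) =
      ∑ j ∈ range (orderOf χ), ∑ z, (χ ^ j) z * η (1 + b * z) := by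
    rw [sum_comm, Fintype.sum_eq_add_sum_compl 0]
    simp only [MulChar.map_zero, zero_mul, sum_const_zero, zero_add]
    refine sum_congr rfl fun z hz => ?_
    rw [nsmul_eq_mul, ← sum_range_orderOf_pow_apply χ (by simpa using hz), sum_mul]
  rw [sum_comp_pow χ.orderOf_pos.ne' fun z => η (1 + b * z), hsum,
    sum_congr rfl fun j _ => sum_mul_apply_one_add_mul (χ ^ j) η hb, range_eq_Ico,
    sum_eq_sum_Ico_succ_bot χ.orderOf_pos, pow_zero, jacobiSum_one_nontrivial hη,
    MulChar.one_apply (neg_ne_zero.mpr (inv_ne_zero hb)).isUnit, mul_zero, add_zero, map_one]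
  ring

theorem jacobiSum_pow_char_pow (p k : ℕ) [Fact p.Prime] [CharP F p] (χ η : MulChar F R) :
    jacobiSum (χ ^ p ^ k) (η ^ p ^ k) = jacobiSum χ η := by
  have hpk : p ^ k ≠ 0 := pow_ne_zero k (Fact.out : p.Prime).ne_zero
  simp only [jacobiSum]
  rw [← (iterateFrobeniusEquiv F p k).toEquiv.sum_comp fun x => χ x * η (1 - x)]
  refine sum_congr rfl fun x _ => ?_
  rw [MulChar.pow_apply' _ hpk, MulChar.pow_apply' _ hpk, ← map_pow, ← map_pow,
    sub_pow_char_pow, one_pow]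
  rfl

-- Frobenius invariance gives `J(χ⁻¹, η⁻¹) = J(χ, η)`, and the product of the two is `#F`.
theorem jacobiSum_sq_eq_card {K : Type*} [Field K] (hK : ringChar K ≠ ringChar F) {p k : ℕ}
    [Fact p.Prime] [CharP F p] {χ η : MulChar F K} (hχ : χ ≠ 1) (hη : η ≠ 1) (hχη : χ * η ≠ 1)
    (hχinv : χ ^ p ^ k = χ⁻¹) (hηinv : η ^ p ^ k = η⁻¹) :
    jacobiSum χ η ^ 2 = Fintype.card F := by
  rw [← jacobiSum_mul_jacobiSum_inv hK hχ hη hχη, ← hχinv, ← hηinv, jacobiSum_pow_char_pow, sq]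

end PowerCharacterSums

section HyperellipticSums

open Finset

theorem exists_int_eq_sum_of_pow_eq_one {ι : Type*} {T : Finset ι} {ζ : ι → ℂ} {k : ℕ}
    (hk : k ≠ 0) (hζ : ∀ i ∈ T, ζ i ^ k = 1) {a : ℚ} (ha : ∑ i ∈ T, ζ i = a) :
    ∃ e : ℤ, ∑ i ∈ T, ζ i = e ∧ |e| ≤ #T := by
  have hint : IsIntegral ℤ (∑ i ∈ T, ζ i) := IsIntegral.sum _ fun i hi =>
    IsIntegral.of_pow (Nat.pos_of_ne_zero hk) (hζ i hi ▸ isIntegral_one)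
  obtain ⟨e, he⟩ := hint.exists_int_iff_exists_rat.mp ⟨a, ha⟩
  refine ⟨e, he, ?_⟩
  have hnorm : ‖(e : ℂ)‖ ≤ #T := by
    rw [← he]
    refine (norm_sum_le _ _).trans_eq ?_
    rw [sum_congr rfl fun i hi => Complex.norm_eq_one_of_pow_eq_one (hζ i hi) hk]
    simp
  rw [Complex.norm_intCast] at hnorm
  exact_mod_cast hnorm

variable {F : Type*} [Field F] [Fintype F]

theorem ringChar_ne_two_of_odd_card (hF : Odd (Fintype.card F)) : ringChar F ≠ 2 := fun h =>
  Nat.not_even_iff_odd.mpr hF (Nat.even_iff.mpr (FiniteField.even_card_of_char_two h))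

theorem jacobiSum_sq_eq_card_of_isQuadratic {K : Type*} [Field K] (hK : ringChar K ≠ ringChar F)
    {p k n : ℕ} [Fact p.Prime] [CharP F p] (hp : p ≠ 2) (hn : Odd n) (hnp : n ∣ p ^ k + 1)
    {χ η : MulChar F K} (hχ : χ ≠ 1) (hχn : χ ^ n = 1) (hη : η ≠ 1) (hηquad : η.IsQuadratic) :
    jacobiSum χ η ^ 2 = Fintype.card F := by
  have hχη : χ * η ≠ 1 := fun h => hη <| by
    rw [← hηquad.pow_odd hn, ← inv_eq_of_mul_eq_one_right h, inv_pow, hχn, inv_one]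
  have hχinv : χ ^ p ^ k = χ⁻¹ := eq_inv_of_mul_eq_one_left <| by
    rw [← pow_succ, orderOf_dvd_iff_pow_eq_one.mp ((orderOf_dvd_of_pow_eq_one hχn).trans hnp)]
  have hp_odd : Odd p := (Fact.out : p.Prime).odd_of_ne_two hp
  have hηinv : η ^ p ^ k = η⁻¹ := by rw [hηquad.pow_odd hp_odd.pow, hηquad.inv]
  exact jacobiSum_sq_eq_card hK hχ hη hχη hχinv hηinv

theorem apply_mul_jacobiSum_div_pow_eq_one {K : Type*} [Field K] (hK : ringChar K ≠ ringChar F)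
    {p k n R : ℕ} [Fact p.Prime] [CharP F p] (hp : p ≠ 2) (hn : Odd n) (hnp : n ∣ p ^ k + 1)
    (hR : Fintype.card F = R ^ 2) (hR₀ : (R : K) ≠ 0) {χ η : MulChar F K} (hχ : χ ≠ 1)
    (hχn : χ ^ n = 1) (hη : η ≠ 1) (hηquad : η.IsQuadratic) {a : F} (ha : a ≠ 0) :
    (χ a * jacobiSum χ η / R) ^ (2 * n) = 1 := by
  have hχa : χ a ^ n = 1 := by
    rw [← χ.pow_apply' hn.pos.ne', hχn, MulChar.one_apply ha.isUnit]
  have hJ : jacobiSum χ η ^ 2 = (R : K) ^ 2 := by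
    rw [jacobiSum_sq_eq_card_of_isQuadratic hK hp hn hnp hχ hχn hη hηquad, hR, Nat.cast_pow]
  calc (χ a * jacobiSum χ η / R) ^ (2 * n)
      = (χ a ^ n) ^ 2 * (jacobiSum χ η ^ 2 / (R : K) ^ 2) ^ n := by ring
    _ = 1 := by rw [hχa, hJ, div_self (pow_ne_zero 2 hR₀), one_pow, one_pow, one_mul]

theorem exists_eq_pow_of_card_eq_pow {Q s : ℕ} (hF : Fintype.card F = Q ^ s) :
    ∃ p k : ℕ, p.Prime ∧ CharP F p ∧ Q = p ^ k := by
  obtain ⟨p, hchar, l, hp, hl⟩ := FiniteField.card' F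
  have hs : s ≠ 0 := by
    rintro rfl
    exact Fintype.one_lt_card.ne' hF
  obtain ⟨k, -, hk⟩ := (Nat.dvd_prime_pow hp).mp (hl ▸ hF ▸ dvd_pow_self Q hs)
  exact ⟨p, k, hp, hchar, hk⟩

variable [DecidableEq F]

/-- The character sum `∑ₓ η(1 + b xⁿ)` of the quadratic character `η`: the number of affine points
of the hyperelliptic curve `y² = 1 + b xⁿ`, minus the cardinality of the field. -/
def hyperellipticSum (n : ℕ) (b : F) : ℤ :=
  ∑ x, quadraticChar F (1 + b * x ^ n)

theorem hyperellipticSum_modEq_one {n : ℕ} (hn : n ∣ Fintype.card F - 1) (b : F) :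
    hyperellipticSum n b ≡ 1 [ZMOD n] := by
  have hn₀ : n ≠ 0 := ne_zero_of_dvd_ne_zero (Nat.sub_pos_of_lt Fintype.one_lt_card).ne' hn
  rw [Int.modEq_comm, Int.modEq_iff_dvd, hyperellipticSum,
    sum_comp_pow hn₀ fun z => quadraticChar F (1 + b * z), mul_zero, add_zero, map_one,
    add_sub_cancel_left]
  refine dvd_sum fun z hz => ?_
  rw [nsmul_eq_mul]
  refine Dvd.dvd.mul_right ?_ _
  rcases card_filter_pow_eq_zero_or_eq hn (z := z) (by simpa using hz) with h | h <;> simp [h]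

theorem sum_hyperellipticSum (hF : ringChar F ≠ 2) {n : ℕ} (hn : n ≠ 0) :
    ∑ b ∈ ({0}ᶜ : Finset F), hyperellipticSum n b = 0 := by
  have hzero : hyperellipticSum n (0 : F) = Fintype.card F := by simp [hyperellipticSum]
  have hinner : ∀ x : F, x ≠ 0 → ∑ b, quadraticChar F (1 + b * x ^ n) = 0 := fun x hx => by
    rw [← quadraticChar_sum_zero hF]
    exact ((Equiv.mulRight₀ (x ^ n) (pow_ne_zero n hx)).trans (Equiv.addLeft 1)).sum_comp
      fun z => quadraticChar F z
  have htotal : ∑ b : F, hyperellipticSum n b = Fintype.card F := by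
    simp only [hyperellipticSum]
    rw [sum_comm, Fintype.sum_eq_single 0 hinner]
    simp [hn]
  rw [Fintype.sum_eq_add_sum_compl 0, hzero] at htotal
  exact left_eq_add.mp htotal.symm

theorem exists_hyperellipticSum_eq_mul {p k n R : ℕ} [Fact p.Prime] [CharP F p] (hp : p ≠ 2)
    (hn : Odd n) (hnp : n ∣ p ^ k + 1) (hnF : n ∣ Fintype.card F - 1)
    (hR : Fintype.card F = R ^ 2) {b : F} (hb : b ≠ 0) :
    ∃ e : ℤ, hyperellipticSum n b = R * e ∧ |e| ≤ n - 1 := by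
  have hFp : ringChar F = p := ringChar.eq F p
  have hF : ringChar F ≠ 2 := hFp ▸ hp
  have hK : ringChar ℂ ≠ ringChar F := by
    rw [hFp, ringChar.eq_zero]
    exact (NeZero.ne p).symm
  have hR₀ : R ≠ 0 := by
    rintro rfl
    exact Fintype.card_ne_zero hR
  obtain ⟨χ, hχ⟩ := MulChar.exists_mulChar_orderOf F hnF (Complex.isPrimitiveRoot_exp n hn.pos.ne')
  set η : MulChar F ℂ := (quadraticChar F).ringHomComp (Int.castRingHom ℂ) with hη_def
  have hη : η ≠ 1 :=
    (MulChar.ringHomComp_ne_one_iff (RingHom.injective_int _)).mpr (quadraticChar_ne_one hF)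
  have hsum : ∑ j ∈ Ico 1 n, (χ ^ j) (-b⁻¹) * jacobiSum (χ ^ j) η / R =
      (hyperellipticSum n b / R : ℚ) := by
    rw [← sum_div, ← hχ, ← sum_apply_one_add_mul_pow χ hη hb, hχ, hyperellipticSum]
    simp [hη_def]
  have hroot : ∀ j ∈ Ico 1 n, ((χ ^ j) (-b⁻¹) * jacobiSum (χ ^ j) η / R) ^ (2 * n) = 1 :=
    fun j hj => by
      obtain ⟨hj₀, hjn⟩ := mem_Ico.mp hj
      have hχj : χ ^ j ≠ 1 :=
        pow_ne_one_of_lt_orderOf (Nat.one_le_iff_ne_zero.mp hj₀) (hχ.symm ▸ hjn)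
      have hχjn : (χ ^ j) ^ n = 1 := by rw [pow_right_comm, ← hχ, pow_orderOf_eq_one, one_pow]
      exact apply_mul_jacobiSum_div_pow_eq_one hK hp hn hnp hR (Nat.cast_ne_zero.mpr hR₀) hχj hχjn
        hη ((quadraticChar_isQuadratic F).comp _) (neg_ne_zero.mpr (inv_ne_zero hb))
  obtain ⟨e, he, hle⟩ :=
    exists_int_eq_sum_of_pow_eq_one (mul_ne_zero two_ne_zero hn.pos.ne') hroot hsum
  refine ⟨e, ?_, ?_⟩
  · rw [hsum, Rat.cast_div, Rat.cast_intCast, Rat.cast_natCast,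
      div_eq_iff (Nat.cast_ne_zero.mpr hR₀), mul_comm] at he
    exact_mod_cast he
  · rwa [Nat.card_Ico, Nat.cast_sub hn.pos, Nat.cast_one] at hle

theorem exists_abs_hyperellipticSum_eq_of_modEq {p k n R : ℕ} [Fact p.Prime] [CharP F p]
    (hp : p ≠ 2) (hn : Odd n) (hnp : n ∣ p ^ k + 1) (hnF : n ∣ Fintype.card F - 1)
    (hR : Fintype.card F = R ^ 2) {σ : ℤ} (hσ : |σ| = 1) (hRσ : R ≡ σ [ZMOD n]) :
    ∃ b : F, b ≠ 0 ∧ |hyperellipticSum n b| = (n - 1) * R := by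
  by_contra! hne
  have hF : ringChar F ≠ 2 := ringChar.eq F p ▸ hp
  have hR₀ : R ≠ 0 := by
    rintro rfl
    exact Fintype.card_ne_zero hR
  have hσ₀ : σ ≠ 0 := by
    rintro rfl
    simp at hσ
  have hconst : ∀ b ∈ ({0}ᶜ : Finset F), hyperellipticSum n b = R * σ := fun b hb => by
    have hb₀ : b ≠ 0 := by simpa using hb
    obtain ⟨e, he, hle⟩ := exists_hyperellipticSum_eq_mul hp hn hnp hnF hR hb₀
    have hlt : |e| < n - 1 := hle.lt_of_ne fun h => hne b hb₀ <| by
      rw [he, abs_mul, h, Nat.abs_cast, mul_comm]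
    have hmod : e ≡ σ [ZMOD n] :=
      calc e = σ * σ * e := by rw [← abs_mul_abs_self, hσ, one_mul, one_mul]
        _ ≡ σ * R * e [ZMOD n] := (hRσ.symm.mul_left σ).mul_right e
        _ = σ * hyperellipticSum n b := by rw [he, mul_assoc]
        _ ≡ σ * 1 [ZMOD n] := (hyperellipticSum_modEq_one hnF b).mul_left σ
        _ = σ := mul_one σ
    have hdist : |σ - e| < n := by linarith [abs_sub σ e]
    rw [he, sub_eq_zero.mp (Int.eq_zero_of_abs_lt_dvd hmod.dvd hdist)]
  have hsum := sum_hyperellipticSum hF hn.pos.ne'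
  rw [sum_congr rfl hconst, sum_const, nsmul_eq_mul] at hsum
  have hcard : #({0}ᶜ : Finset F) ≠ 0 := by
    rw [card_compl, card_singleton]
    exact (Nat.sub_pos_of_lt Fintype.one_lt_card).ne'
  simp [hR₀, hσ₀, hcard] at hsum

theorem dvd_sq_pow_sub_one_of_dvd_add_one {n Q : ℕ} (h : n ∣ Q + 1) (s : ℕ) :
    n ∣ Q ^ (2 * s) - 1 := by
  have hsq : n ∣ Q ^ 2 - 1 ^ 2 := Nat.sq_sub_sq Q 1 ▸ h.mul_right _
  rw [one_pow] at hsq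
  rw [pow_mul]
  exact hsq.trans (by simpa using Nat.sub_dvd_pow_sub_pow (Q ^ 2) 1 s)

theorem exists_abs_hyperellipticSum_eq {n Q s : ℕ} (hn : Odd n) (hQ : Odd Q) (hQn : n ∣ Q + 1)
    (hF : Fintype.card F = Q ^ (2 * s)) :
    ∃ b : F, b ≠ 0 ∧ |hyperellipticSum n b| = (n - 1) * Q ^ s := by
  obtain ⟨p, k, hp, hchar, rfl⟩ := exists_eq_pow_of_card_eq_pow hF
  have : Fact p.Prime := ⟨hp⟩
  have hp2 : p ≠ 2 :=
    ringChar.eq F p ▸ ringChar_ne_two_of_odd_card (hF ▸ hQ.pow)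
  have hmod : (((p ^ k) ^ s : ℕ) : ℤ) ≡ (-1) ^ s [ZMOD n] := by
    have hQmod : ((p ^ k : ℕ) : ℤ) ≡ -1 [ZMOD n] := by
      rw [Int.modEq_comm, Int.modEq_iff_dvd, sub_neg_eq_add]
      exact_mod_cast hQn
    exact_mod_cast hQmod.pow s
  exact_mod_cast exists_abs_hyperellipticSum_eq_of_modEq hp2 hn hQn
    (hF ▸ dvd_sq_pow_sub_one_of_dvd_add_one hQn s) (by rw [hF, mul_comm, pow_mul]) (by simp) hmod

end HyperellipticSums

section RationalPoints

open Finset Polynomial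

variable {F : Type*} [Field F] [Fintype F]

theorem card_filter_sq_eq [DecidableEq F] (hF : ringChar F ≠ 2) (f : F → F) :
    (#{z : F × F | z.2 ^ 2 = f z.1} : ℤ) = Fintype.card F + ∑ x, quadraticChar F (f x) := by
  have hfibre : ∀ x, (#{y : F | y ^ 2 = f x} : ℤ) = 1 + quadraticChar F (f x) := fun x => by
    rw [add_comm, ← quadraticChar_card_sqrts hF]
    congr 2
    ext y
    simp
  simp only [card_filter, univ_product_univ.symm, sum_product]
  simp only [← card_filter, Nat.cast_sum, hfibre, sum_add_distrib, sum_const, card_univ,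
    nsmul_eq_mul, mul_one]

theorem exists_card_filter_sq_eq_mul_pow_add [DecidableEq F] {n Q s : ℕ} (hn : Odd n)
    (hQ : Odd Q) (hQn : n ∣ Q + 1) (hF : Fintype.card F = Q ^ (2 * s)) :
    ∃ a c : F, a ≠ 0 ∧
      #{z : F × F | z.2 ^ 2 = a * z.1 ^ n + c} = Q ^ (2 * s) + (n - 1) * Q ^ s := by
  have hF₂ : ringChar F ≠ 2 := ringChar_ne_two_of_odd_card (hF ▸ hQ.pow)
  obtain ⟨b, hb, hsum⟩ := exists_abs_hyperellipticSum_eq hn hQ hQn hF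
  obtain ⟨c, hc, htwist⟩ :
      ∃ c : F, c ≠ 0 ∧ quadraticChar F c * hyperellipticSum n b = |hyperellipticSum n b| := by
    rcases le_total 0 (hyperellipticSum n b) with h | h
    · exact ⟨1, one_ne_zero, by rw [map_one, one_mul, abs_of_nonneg h]⟩
    · obtain ⟨u, hu⟩ := quadraticChar_exists_neg_one' hF₂
      exact ⟨u, u.ne_zero, by rw [hu, neg_one_mul, abs_of_nonpos h]⟩
  refine ⟨c * b, c, mul_ne_zero hc hb, ?_⟩
  zify [hn.pos]
  rw [card_filter_sq_eq hF₂ fun x => c * b * x ^ n + c, hF, ← hsum, ← htwist, hyperellipticSum,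
    mul_sum, Nat.cast_pow]
  congr 1
  refine sum_congr rfl fun x _ => ?_
  rw [← map_mul]
  ring_nf

theorem card_filter_sq_eq_mul_pow_add_le [DecidableEq F] {n : ℕ} (hn : n ∣ Fintype.card F - 1)
    {a : F} (ha : a ≠ 0) (c : F) :
    #{z : F × F | z.2 ^ 2 = a * z.1 ^ n + c} ≤
      n * #{y : F | #{x : F | y ^ 2 = a * x ^ n + c} = n} + 2 := by
  have hn₀ : n ≠ 0 := ne_zero_of_dvd_ne_zero (Nat.sub_pos_of_lt Fintype.one_lt_card).ne' hn
  have hfibre : ∀ y : F, #{x : F | y ^ 2 = a * x ^ n + c} ≤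
      (if #{x : F | y ^ 2 = a * x ^ n + c} = n then n else 0) + if y ^ 2 = c then 1 else 0 := by
    intro y
    have hset : (univ.filter fun x : F => y ^ 2 = a * x ^ n + c) =
        univ.filter fun x => x ^ n = (y ^ 2 - c) / a := by
      ext x
      simp only [mem_filter_univ, eq_div_iff ha, eq_sub_iff_add_eq, mul_comm a, eq_comm]
    rw [hset]
    by_cases hy : y ^ 2 = c
    · simp [hy, hn₀, filter_eq']
    · have hz : (y ^ 2 - c) / a ≠ 0 := div_ne_zero (sub_ne_zero.mpr hy) ha
      rcases card_filter_pow_eq_zero_or_eq hn hz with h | h <;> simp [h]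
  have hroots : #{y : F | y ^ 2 = c} ≤ 2 := by
    refine (card_le_card fun y hy => ?_).trans
      ((nthRoots 2 c).toFinset_card_le.trans (card_nthRoots 2 c))
    simpa [mem_nthRoots] using hy
  calc #{z : F × F | z.2 ^ 2 = a * z.1 ^ n + c}
      = ∑ y : F, #{x : F | y ^ 2 = a * x ^ n + c} := by
        simp only [card_filter, univ_product_univ.symm, sum_product_right]
    _ ≤ ∑ y : F, ((if #{x : F | y ^ 2 = a * x ^ n + c} = n then n else 0) +
          if y ^ 2 = c then 1 else 0) := sum_le_sum fun y _ => hfibre y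
    _ = n * #{y : F | #{x : F | y ^ 2 = a * x ^ n + c} = n} + #{y : F | y ^ 2 = c} := by
        rw [sum_add_distrib, ← sum_filter, sum_const, smul_eq_mul, mul_comm, ← card_filter]
    _ ≤ _ := Nat.add_le_add_left hroots _

theorem exists_fibres_of_le_card_div [DecidableEq F] {m n : ℕ} (hn : n ∣ Fintype.card F - 1)
    (hn₂ : 2 < n) {a c : F} (ha : a ≠ 0) (hm : m ≤ #{z : F × F | z.2 ^ 2 = a * z.1 ^ n + c} / n) :
    ∃ (y : Fin m → F) (x : Fin m → Fin n → F), y.Injective ∧ (∀ j, (x j).Injective) ∧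
      ∀ j i, y j ^ 2 = a * x j i ^ n + c := by
  set Y : Finset F := {y | #{x : F | y ^ 2 = a * x ^ n + c} = n}
  have hmY : m ≤ #Y := by
    refine hm.trans (Nat.le_of_lt_succ ((Nat.div_lt_iff_lt_mul (by omega)).mpr ?_))
    calc #{z : F × F | z.2 ^ 2 = a * z.1 ^ n + c}
        ≤ n * #Y + 2 := card_filter_sq_eq_mul_pow_add_le hn ha c
      _ < (#Y + 1) * n := by rw [add_one_mul, mul_comm]; omega
  obtain ⟨y, hy⟩ := Function.Embedding.exists_of_card_le_finset ((Fintype.card_fin m).trans_le hmY)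
  have hfibre : ∀ j, #{x : F | y j ^ 2 = a * x ^ n + c} = n := fun j =>
    (mem_filter.mp (hy ⟨j, rfl⟩)).2
  choose x hx using fun j => Function.Embedding.exists_of_card_le_finset
    ((Fintype.card_fin n).trans (hfibre j).symm).le
  exact ⟨y, fun j => x j, y.injective, fun j => (x j).injective,
    fun j i => (mem_filter.mp (hx j ⟨i, rfl⟩)).2⟩

theorem exists_polynomial_fibres {m n Q s : ℕ} (hn : Odd n) (hn₂ : 2 < n) (hQ : Odd Q)
    (hQn : n ∣ Q + 1) (hF : Fintype.card F = Q ^ (2 * s))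
    (hm : m ≤ (Q ^ (2 * s) + (n - 1) * Q ^ s) / n) :
    ∃ (P : F[X]) (y : Fin m → F) (x : Fin m → Fin n → F), P.natDegree = n ∧ y.Injective ∧
      (∀ j, (x j).Injective) ∧ ∀ j i, y j ^ 2 = P.eval (x j i) := by
  classical
  obtain ⟨a, c, ha, hcard⟩ := exists_card_filter_sq_eq_mul_pow_add hn hQ hQn hF
  obtain ⟨y, x, hy, hx, hxy⟩ := exists_fibres_of_le_card_div
    (hF ▸ dvd_sq_pow_sub_one_of_dvd_add_one hQn s) hn₂ ha (hcard ▸ hm)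
  refine ⟨C a * X ^ n + C c, y, x, ?_, hy, hx, fun j i => ?_⟩
  · rw [natDegree_add_C, natDegree_C_mul_X_pow n a ha]
  · simpa using hxy j i

end RationalPoints

section CurveNorm

open Finset Polynomial

variable {F : Type*} [Field F]

/-- The norm `A² - B²P` from `F(x, y)` to `F(x)` of the function `A + By` on the curve
`y² = P(x)`. -/
noncomputable def curveNorm (P A B : F[X]) : F[X] :=
  A ^ 2 - B ^ 2 * P

theorem curveNorm_ne_zero {P A B : F[X]} (hP : Odd P.natDegree) (hAB : (A, B) ≠ 0) :
    curveNorm P A B ≠ 0 := by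
  intro hN
  have hP₀ : P ≠ 0 := by
    rintro rfl
    simp at hP
  have hB : B ≠ 0 := by
    rintro rfl
    exact hAB (by simpa [curveNorm] using hN)
  have hdeg := congrArg natDegree (sub_eq_zero.mp hN)
  rw [natDegree_mul (pow_ne_zero 2 hB) hP₀, natDegree_pow, natDegree_pow] at hdeg
  obtain ⟨k, hk⟩ := hP
  omega

theorem eval_curveNorm {P : F[X]} {u v : F} (hv : v ^ 2 = P.eval u) (A B : F[X]) :
    (curveNorm P A B).eval u =
      (A.eval u - B.eval u * v) * (A.eval u + B.eval u * v) := by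
  simp only [curveNorm, eval_sub, eval_mul, eval_pow, ← hv]
  ring

theorem two_le_rootMultiplicity_curveNorm {P A B : F[X]} (hN : curveNorm P A B ≠ 0) {u : F}
    (hA : A.IsRoot u) (hB : B.IsRoot u) :
    2 ≤ (curveNorm P A B).rootMultiplicity u := by
  rw [le_rootMultiplicity_iff hN]
  exact dvd_sub (pow_dvd_pow_of_dvd (dvd_iff_isRoot.mpr hA) 2)
    ((pow_dvd_pow_of_dvd (dvd_iff_isRoot.mpr hB) 2).mul_right P)

theorem card_le_rootMultiplicity_curveNorm {P A B : F[X]} (hN : curveNorm P A B ≠ 0) {u : F}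
    {V : Finset F} (hV : ∀ v ∈ V, v ^ 2 = P.eval u)
    (hzero : ∀ v ∈ V, A.eval u + B.eval u * v = 0) :
    #V ≤ (curveNorm P A B).rootMultiplicity u := by
  classical
  rcases Nat.lt_or_ge 1 #V with hcard | hcard
  · obtain ⟨v, hv, w, hw, hvw⟩ := one_lt_card.mp hcard
    have hB : B.eval u = 0 := by
      have hmul : B.eval u * (v - w) = 0 := by linear_combination hzero v hv - hzero w hw
      exact (mul_eq_zero.mp hmul).resolve_right (sub_ne_zero.mpr hvw)
    have hA : A.eval u = 0 := by simpa [hB] using hzero v hv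
    have hroots : V ⊆ (nthRoots 2 (P.eval u)).toFinset := fun z hz => by
      rw [Multiset.mem_toFinset, mem_nthRoots two_pos]
      exact hV z hz
    calc #V ≤ #(nthRoots 2 (P.eval u)).toFinset := card_le_card hroots
      _ ≤ 2 := (Multiset.toFinset_card_le _).trans (card_nthRoots 2 _)
      _ ≤ _ := two_le_rootMultiplicity_curveNorm hN hA hB
  · rcases V.eq_empty_or_nonempty with rfl | ⟨v, hv⟩
    · simp
    · refine hcard.trans ((rootMultiplicity_pos hN).mpr ?_)
      rw [IsRoot, eval_curveNorm (hV v hv), hzero v hv, mul_zero]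

theorem card_le_natDegree_curveNorm {P A B : F[X]} (hN : curveNorm P A B ≠ 0)
    {Z : Finset (F × F)} (hZ : ∀ z ∈ Z, z.2 ^ 2 = P.eval z.1)
    (hzero : ∀ z ∈ Z, A.eval z.1 + B.eval z.1 * z.2 = 0) :
    #Z ≤ (curveNorm P A B).natDegree := by
  classical
  have hroots : ∀ z ∈ Z, z.1 ∈ (curveNorm P A B).roots.toFinset := fun z hz => by
    rw [Multiset.mem_toFinset, mem_roots hN, IsRoot, eval_curveNorm (hZ z hz), hzero z hz,
      mul_zero]
  have hfibre : ∀ u, #{z ∈ Z | z.1 = u} ≤ (curveNorm P A B).roots.count u := fun u => by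
    have hinj : Set.InjOn Prod.snd (Z.filter fun z => z.1 = u : Set (F × F)) := by
      rintro ⟨a, v⟩ ha ⟨b, w⟩ hb hvw
      simp only [coe_filter, Set.mem_ofPred_eq] at ha hb
      exact Prod.ext (ha.2.trans hb.2.symm) hvw
    rw [count_roots, ← card_image_of_injOn hinj]
    refine card_le_rootMultiplicity_curveNorm hN ?_ ?_ <;> simp only [mem_image, mem_filter]
    · rintro v ⟨z, ⟨hz, rfl⟩, rfl⟩
      exact hZ z hz
    · rintro v ⟨z, ⟨hz, rfl⟩, rfl⟩
      exact hzero z hz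
  calc #Z = ∑ u ∈ (curveNorm P A B).roots.toFinset, #{z ∈ Z | z.1 = u} :=
        card_eq_sum_card_fiberwise hroots
    _ ≤ ∑ u ∈ (curveNorm P A B).roots.toFinset, (curveNorm P A B).roots.count u :=
        sum_le_sum fun u _ => hfibre u
    _ = (curveNorm P A B).roots.card := Multiset.toFinset_sum_count_eq _
    _ ≤ (curveNorm P A B).natDegree := card_roots' _

/-- The pairs `(A, B)` for which `A + By` has a pole of order at most `D` at the point at infinity
of `y² = P(x)`, where `P` has odd degree `n`: there `x` and `y` have poles of orders `2` and `n`.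
The truncated subtraction forces `B = 0` when `D < n`. -/
noncomputable def poleSpace (F : Type*) [Field F] (n D : ℕ) : Submodule F (F[X] × F[X]) :=
  (degreeLE F (D / 2 : ℕ)).prod (degreeLT F ((D + 2 - n) / 2))

theorem natDegree_curveNorm_le {P A B : F[X]} {D : ℕ}
    (hAB : (A, B) ∈ poleSpace F P.natDegree D) :
    (curveNorm P A B).natDegree ≤ D := by
  obtain ⟨hA, hB⟩ := hAB
  have hAsq : (A ^ 2).natDegree ≤ D := by
    have hle : A.natDegree ≤ D / 2 := natDegree_le_of_degree_le (mem_degreeLE.mp hA)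
    rw [natDegree_pow]
    omega
  rcases eq_or_ne B 0 with rfl | hB₀
  · simpa [curveNorm] using hAsq
  refine (natDegree_sub_le_of_le hAsq ?_).trans (max_self D).le
  have hlt : B.natDegree < (D + 2 - P.natDegree) / 2 :=
    (natDegree_lt_iff_degree_lt hB₀).mpr (mem_degreeLT.mp hB)
  calc (B ^ 2 * P).natDegree ≤ 2 * B.natDegree + P.natDegree :=
        natDegree_mul_le.trans (by rw [natDegree_pow])
    _ ≤ D := by omega

theorem exists_mem_poleSpace {P : F[X]} {a b D : ℕ} (h : 2 * a + P.natDegree * b ≤ D) :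
    ∃ f ∈ poleSpace F P.natDegree D, ∀ u v : F, v ^ 2 = P.eval u →
      f.1.eval u + f.2.eval u * v = u ^ a * v ^ b := by
  have hdeg : ∀ k, (X ^ a * P ^ k).natDegree ≤ a + P.natDegree * k := fun k =>
    natDegree_mul_le.trans_eq (by rw [natDegree_X_pow, natDegree_pow, mul_comm])
  obtain ⟨k, rfl | rfl⟩ := b.even_or_odd'
  · refine ⟨(X ^ a * P ^ k, 0), ⟨mem_degreeLE.mpr ?_, Submodule.zero_mem _⟩, fun u v hv => ?_⟩
    · refine degree_le_of_natDegree_le ((hdeg k).trans ?_)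
      rw [mul_left_comm] at h
      omega
    · simp [← hv, pow_mul]
  · refine ⟨(0, X ^ a * P ^ k), ⟨Submodule.zero_mem _, mem_degreeLT.mpr ?_⟩, fun u v hv => ?_⟩
    · refine degree_le_natDegree.trans_lt (Nat.cast_lt.mpr ((hdeg k).trans_lt ?_))
      rw [mul_add_one, mul_left_comm] at h
      omega
    · simp [← hv, pow_succ, pow_mul, mul_assoc]

end CurveNorm

section MonomialCodes

open Finset Polynomial

variable {F : Type*} [Field F] {m n : ℕ}

theorem card_filter_eq_zero_add_hammingWt [DecidableEq F] (c : Fin n → F) :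
    #{k | c k = 0} + hammingWt c = n := by
  rw [hammingWt, card_filter_add_card_filter_not, card_fin]

theorem card_filter_comp_divNat (p : Fin m → Prop) [DecidablePred p] :
    #{k : Fin (m * n) | p k.divNat} = #{j | p j} * n := by
  have hset : ({k : Fin (m * n) | p k.divNat} : Finset _) =
      (({j | p j} : Finset _) ×ˢ (univ : Finset (Fin n))).map finProdFinEquiv.toEmbedding := by
    ext k
    simp
  rw [hset, card_map, card_product, card_fin]

theorem lt_card_filter_eval_ne_zero_add [DecidableEq F] {u : Fin n → F} (hu : u.Injective) {r : ℕ}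
    {f : F[X]} (hf : f ∈ degreeLT F r) (hf₀ : f ≠ 0) :
    n < #{i | f.eval (u i) ≠ 0} + r := by
  have hroots : #{i | f.eval (u i) = 0} ≤ f.natDegree := by
    rw [← card_image_of_injective _ hu]
    refine card_le_degree_of_subset_roots fun z hz => ?_
    obtain ⟨i, hi, rfl⟩ := mem_image.mp (mem_def.mpr hz)
    exact (mem_roots hf₀).mpr (mem_filter.mp hi).2
  have hdeg : f.natDegree < r := (natDegree_lt_iff_degree_lt hf₀).mpr (mem_degreeLT.mp hf)
  have hsplit := card_filter_eq_zero_add_hammingWt fun i => f.eval (u i)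
  rw [hammingWt] at hsplit
  omega

/-- The values of the monomial `x ^ e.1 * y ^ e.2` at the points `(x j i, y j)`; the block of `n`
coordinates with `Fin.divNat` equal to `j` lies over `y j`. -/
def monomialEval (x : Fin m → Fin n → F) (y : Fin m → F) (e : ℕ × ℕ) : Fin (m * n) → F :=
  fun k => x k.divNat k.modNat ^ e.1 * y k.divNat ^ e.2

/-- The evaluation code spanned by the monomials with exponents in `S`. -/
def monomialCode (x : Fin m → Fin n → F) (y : Fin m → F) (S : Finset (ℕ × ℕ)) :
    Submodule F (Fin (m * n) → F) :=
  Submodule.span F (monomialEval x y '' S)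

variable {x : Fin m → Fin n → F} {y : Fin m → F} {S : Finset (ℕ × ℕ)}

theorem monomialEval_finProdFinEquiv (e : ℕ × ℕ) (j : Fin m) (i : Fin n) :
    monomialEval x y e (finProdFinEquiv (j, i)) = x j i ^ e.1 * y j ^ e.2 := by
  have h := finProdFinEquiv.symm_apply_apply (j, i)
  rw [finProdFinEquiv_symm_apply, Prod.mk.injEq] at h
  rw [monomialEval, h.1, h.2]

theorem monomialEval_mem_monomialCode {e : ℕ × ℕ} (he : e ∈ S) :
    monomialEval x y e ∈ monomialCode x y S :=
  Submodule.subset_span ⟨e, he, rfl⟩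

theorem linearIndepOn_monomialEval (hx : ∀ j, (x j).Injective) (hy : y.Injective) :
    LinearIndepOn F (monomialEval x y) (range n ×ˢ range m : Finset (ℕ × ℕ)) := by
  rw [linearIndepOn_finset_iff]
  intro f hf
  have hrow : ∀ j, (fun a : Fin n => ∑ b : Fin m, f (a, b) * y j ^ (b : ℕ)) = 0 := fun j => by
    refine Matrix.eq_zero_of_forall_index_sum_pow_mul_eq_zero (hx j) fun i => ?_
    refine Eq.trans ?_ (congrFun hf (finProdFinEquiv (j, i)))
    rw [sum_product, Finset.sum_apply, sum_range]
    refine sum_congr rfl fun a _ => ?_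
    rw [Finset.sum_apply, sum_range, mul_sum]
    refine sum_congr rfl fun b _ => ?_
    rw [Pi.smul_apply, monomialEval_finProdFinEquiv, smul_eq_mul]
    ring
  rintro ⟨a, b⟩ hab
  rw [mem_product, mem_range, mem_range] at hab
  have hcol : (fun b : Fin m => f (a, b)) = 0 :=
    Matrix.eq_zero_of_forall_index_sum_mul_pow_eq_zero hy fun j => congrFun (hrow j) ⟨a, hab.1⟩
  exact congrFun hcol ⟨b, hab.2⟩

theorem finrank_monomialCode (hx : ∀ j, (x j).Injective) (hy : y.Injective)
    (hS : S ⊆ range n ×ˢ range m) :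
    Module.finrank F (monomialCode x y S) = #S := by
  have hindep : LinearIndepOn F (monomialEval x y) (S : Set (ℕ × ℕ)) :=
    (linearIndepOn_monomialEval hx hy).mono (coe_subset.mpr hS)
  rw [monomialCode, Set.image_eq_range]
  exact (finrank_span_eq_card hindep).trans (Fintype.card_coe S)

theorem exists_poleSpace_of_mem_monomialCode {P : F[X]}
    (hP : ∀ j i, y j ^ 2 = P.eval (x j i)) {D : ℕ}
    (hS : ∀ e ∈ S, 2 * e.1 + P.natDegree * e.2 ≤ D) {c : Fin (m * n) → F}
    (hc : c ∈ monomialCode x y S) :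
    ∃ f ∈ poleSpace F P.natDegree D, ∀ k,
      c k = f.1.eval (x k.divNat k.modNat) + f.2.eval (x k.divNat k.modNat) * y k.divNat := by
  induction hc using Submodule.span_induction with
  | mem c hc =>
    obtain ⟨e, he, rfl⟩ := hc
    obtain ⟨f, hf, hfe⟩ := exists_mem_poleSpace (hS e he)
    exact ⟨f, hf, fun k => (hfe _ _ (hP _ _)).symm⟩
  | zero => exact ⟨0, Submodule.zero_mem _, by simp⟩
  | add c d _ _ hc hd =>
    obtain ⟨f, hf, hfc⟩ := hc
    obtain ⟨h, hh, hhd⟩ := hd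
    refine ⟨f + h, Submodule.add_mem _ hf hh, fun k => ?_⟩
    simp only [Pi.add_apply, hfc, hhd, Prod.fst_add, Prod.snd_add, eval_add]
    ring
  | smul a c _ hc =>
    obtain ⟨f, hf, hfc⟩ := hc
    refine ⟨a • f, Submodule.smul_mem _ a hf, fun k => ?_⟩
    simp only [Pi.smul_apply, hfc, Prod.smul_fst, Prod.smul_snd, eval_smul, smul_eq_mul]
    ring

theorem le_hammingWt_add_of_mem_monomialCode [DecidableEq F] {P : F[X]} (hPodd : Odd P.natDegree)
    (hx : ∀ j, (x j).Injective) (hy : y.Injective) (hP : ∀ j i, y j ^ 2 = P.eval (x j i)) {D : ℕ}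
    (hS : ∀ e ∈ S, 2 * e.1 + P.natDegree * e.2 ≤ D) {c : Fin (m * n) → F}
    (hc : c ∈ monomialCode x y S) (hc₀ : c ≠ 0) :
    m * n ≤ hammingWt c + D := by
  obtain ⟨⟨A, B⟩, hAB, hcAB⟩ := exists_poleSpace_of_mem_monomialCode hP hS hc
  have hAB₀ : (A, B) ≠ 0 := by
    intro h
    obtain ⟨rfl, rfl⟩ := Prod.mk_eq_zero.mp h
    exact hc₀ (funext fun k => by simp [hcAB k])
  let point : Fin (m * n) → F × F := fun k => (x k.divNat k.modNat, y k.divNat)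
  have hpoint : point.Injective := fun k l hkl => by
    obtain ⟨hxkl, hykl⟩ := Prod.mk.inj hkl
    have hdiv := hy hykl
    rw [hdiv] at hxkl
    exact finProdFinEquiv.symm.injective (Prod.ext hdiv (hx _ hxkl))
  have hzeros : #{k | c k = 0} ≤ D :=
    calc #{k | c k = 0} = #(image point {k | c k = 0}) := (card_image_of_injective _ hpoint).symm
      _ ≤ (curveNorm P A B).natDegree := by
        refine card_le_natDegree_curveNorm (curveNorm_ne_zero hPodd hAB₀) ?_ ?_ <;>
          rw [forall_mem_image]
        · exact fun k _ => hP _ _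
        · exact fun k hk => (hcAB k).symm.trans (mem_filter.mp hk).2
      _ ≤ D := natDegree_curveNorm_le hAB
  have hsplit := card_filter_eq_zero_add_hammingWt c
  omega

theorem exists_degreeLT_of_mem_monomialCode {r : ℕ} (hS : ∀ e ∈ S, e.1 < r)
    {c : Fin (m * n) → F} (hc : c ∈ monomialCode x y S) (j : Fin m) :
    ∃ f ∈ degreeLT F r, ∀ i, c (finProdFinEquiv (j, i)) = f.eval (x j i) := by
  induction hc using Submodule.span_induction with
  | mem c hc =>
    obtain ⟨e, he, rfl⟩ := hc
    refine ⟨y j ^ e.2 • X ^ e.1, Submodule.smul_mem _ _ (mem_degreeLT.mpr ?_), fun i => ?_⟩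
    · rw [degree_X_pow]
      exact_mod_cast hS e he
    · rw [monomialEval_finProdFinEquiv, eval_smul, eval_X_pow, smul_eq_mul, mul_comm]
  | zero => exact ⟨0, Submodule.zero_mem _, by simp⟩
  | add c d _ _ hc hd =>
    obtain ⟨f, hf, hfc⟩ := hc
    obtain ⟨h, hh, hhd⟩ := hd
    exact ⟨f + h, Submodule.add_mem _ hf hh, fun i => by rw [Pi.add_apply, hfc, hhd, eval_add]⟩
  | smul a c _ hc =>
    obtain ⟨f, hf, hfc⟩ := hc
    exact ⟨a • f, Submodule.smul_mem _ a hf, fun i => by rw [Pi.smul_apply, hfc, eval_smul]⟩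

theorem isLRC_monomialCode [DecidableEq F] {r δ : ℕ} (hrδ : r + δ = n + 1)
    (hx : ∀ j, (x j).Injective) (hS : ∀ e ∈ S, e.1 < r) :
    IsLRC (monomialCode x y S) r δ := by
  intro k
  let coord : Fin n ↪ Fin (m * n) := ⟨fun i => finProdFinEquiv (k.divNat, i), fun i i' h =>
    (Prod.mk.inj (finProdFinEquiv.injective h)).2⟩
  refine ⟨univ.map coord, mem_map.mpr ⟨k.modNat, mem_univ _, ?_⟩, ?_, fun c hc hne => ?_⟩
  · exact finProdFinEquiv.apply_symm_apply k
  · rw [card_map, card_fin]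
    omega
  · obtain ⟨f, hf, hcf : ∀ i, c (coord i) = f.eval _⟩ :=
      exists_degreeLT_of_mem_monomialCode hS hc k.divNat
    have hf₀ : f ≠ 0 := by
      rintro rfl
      obtain ⟨l, hl, hcl⟩ := hne
      obtain ⟨i, -, rfl⟩ := mem_map.mp hl
      exact hcl ((hcf i).trans eval_zero)
    have hweight : n < #{i | c (coord i) ≠ 0} + r := by
      simpa only [← hcf] using lt_card_filter_eval_ne_zero_add (hx k.divNat) hf hf₀
    calc δ ≤ #{i | c (coord i) ≠ 0} := by omega
      _ = #{l ∈ univ.map coord | c l ≠ 0} := by rw [filter_map, card_map]; rfl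

end MonomialCodes

section CodeParameters

open Finset Polynomial

/-- The exponents of the monomials `x ^ a * y ^ b` with `a < r` and `b < t`, together with `y ^ t`.
The extra monomial raises the dimension to `t * r + 1`. -/
def lrcExponents (r t : ℕ) : Finset (ℕ × ℕ) :=
  insert (0, t) (range r ×ˢ range t)

theorem card_lrcExponents (r t : ℕ) : #(lrcExponents r t) = t * r + 1 := by
  rw [lrcExponents, card_insert_of_notMem (by simp), card_product, card_range, card_range, mul_comm]

theorem fst_lt_of_mem_lrcExponents {r t : ℕ} (hr : 0 < r) : ∀ e ∈ lrcExponents r t, e.1 < r := by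
  rintro ⟨a, b⟩ he
  simp only [lrcExponents, mem_insert, Prod.mk.injEq, mem_product, mem_range] at he
  omega

theorem lrcExponents_subset {m n r t : ℕ} (hr : 0 < r) (hrn : r ≤ n) (htm : t < m) :
    lrcExponents r t ⊆ range n ×ˢ range m := by
  rintro ⟨a, b⟩ he
  simp only [lrcExponents, mem_insert, Prod.mk.injEq, mem_product, mem_range] at he ⊢
  omega

theorem two_mul_add_mul_le_of_mem_lrcExponents (n : ℕ) {r t : ℕ} :
    ∀ e ∈ lrcExponents r t, 2 * e.1 + n * e.2 ≤ t * n + (2 * r - (n + 2)) := by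
  rintro ⟨a, b⟩ he
  simp only [lrcExponents, mem_insert, Prod.mk.injEq, mem_product, mem_range] at he
  rcases he with ⟨rfl, rfl⟩ | ⟨ha, hb⟩
  · rw [mul_zero, zero_add, mul_comm]
    exact Nat.le_add_right _ _
  · have hle : n * b + n ≤ t * n := by
      rw [← Nat.mul_succ, mul_comm]
      exact Nat.mul_le_mul_right n hb
    dsimp only
    omega

theorem singletonOptimal_of_add_eq {m n r δ t : ℕ} (hr : 0 < r) (hrδ : r + δ = n + 1)
    (htm : t ≤ m) :
    SingletonOptimal (m * n) (t * r + 1) ((m - t) * n) r δ := by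
  have hceil : (t * r + 1 + r - 1) / r = t + 1 := by
    rw [add_right_comm, Nat.add_sub_cancel, ← Nat.succ_mul, Nat.mul_div_cancel _ hr]
  have hδ : (δ : ℤ) = n + 1 - r := by omega
  rw [SingletonOptimal, hceil, hδ]
  push_cast [htm]
  ring

variable {F : Type*} [Field F] {m n t : ℕ} {x : Fin m → Fin n → F} {y : Fin m → F}

theorem eval_divNat_mem_monomialCode {S : Finset (ℕ × ℕ)} (hS : ∀ b ≤ t, (0, b) ∈ S) {p : F[X]}
    (hp : p.natDegree ≤ t) :
    (fun k => p.eval (y k.divNat)) ∈ monomialCode x y S := by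
  have hsum : (fun k => p.eval (y k.divNat)) =
      ∑ b ∈ range (p.natDegree + 1), p.coeff b • monomialEval x y (0, b) := by
    ext k
    simp [eval_eq_sum_range, monomialEval]
  rw [hsum]
  exact Submodule.sum_smul_mem _ _ fun b hb =>
    monomialEval_mem_monomialCode (hS b (by rw [mem_range] at hb; omega))

variable [DecidableEq F]

theorem exists_mem_monomialCode_hammingWt_eq {S : Finset (ℕ × ℕ)} (hy : y.Injective) (htm : t ≤ m)
    (hS : ∀ b ≤ t, (0, b) ∈ S) :
    ∃ c ∈ monomialCode x y S, hammingWt c = (m - t) * n := by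
  obtain ⟨T, -, hT⟩ := exists_subset_card_eq (htm.trans_eq (card_fin m).symm)
  have hdeg : (Lagrange.nodal T y).natDegree = t := by rw [Lagrange.natDegree_nodal, hT]
  refine ⟨_, eval_divNat_mem_monomialCode hS hdeg.le, ?_⟩
  have hzero : ∀ j, (Lagrange.nodal T y).eval (y j) ≠ 0 ↔ j ∈ Tᶜ := fun j => by
    rw [Lagrange.eval_nodal, prod_ne_zero_iff, mem_compl]
    refine ⟨fun h hj => h j hj (sub_self _), fun hj i hi h => ?_⟩
    exact hj (hy (sub_eq_zero.mp h) ▸ hi)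
  rw [hammingWt, card_filter_comp_divNat fun j => (Lagrange.nodal T y).eval (y j) ≠ 0]
  simp only [hzero, filter_univ_mem, card_compl, hT, Fintype.card_fin]

theorem minDistGe_monomialCode_lrcExponents {P : F[X]} (hPodd : Odd P.natDegree)
    (hPn : P.natDegree = n) (hx : ∀ j, (x j).Injective) (hy : y.Injective)
    (hP : ∀ j i, y j ^ 2 = P.eval (x j i)) (r t : ℕ) :
    MinDistGe (monomialCode x y (lrcExponents r t)) ((m - t) * n - (2 * r - (n + 2))) := by
  subst hPn
  intro c hc hc₀
  have hle := le_hammingWt_add_of_mem_monomialCode hPodd hx hy hP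
    (two_mul_add_mul_le_of_mem_lrcExponents _) hc hc₀
  rw [Nat.sub_mul]
  omega

theorem minDistEq_monomialCode_lrcExponents {P : F[X]} (hPodd : Odd P.natDegree)
    (hPn : P.natDegree = n) (hx : ∀ j, (x j).Injective) (hy : y.Injective)
    (hP : ∀ j i, y j ^ 2 = P.eval (x j i)) {r : ℕ} (hr : 0 < r) (hrn : 2 * r ≤ n + 2)
    (htm : t < m) :
    MinDistEq (monomialCode x y (lrcExponents r t)) ((m - t) * n) := by
  have hS : ∀ b ≤ t, (0, b) ∈ lrcExponents r t := fun b hb => by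
    rw [lrcExponents, mem_insert, Prod.mk.injEq, mem_product, mem_range, mem_range]
    omega
  constructor
  · simpa [Nat.sub_eq_zero_of_le hrn] using
      minDistGe_monomialCode_lrcExponents hPodd hPn hx hy hP r t
  · obtain ⟨c, hc, hcwt⟩ := exists_mem_monomialCode_hammingWt_eq (x := x) hy htm.le hS
    refine ⟨c, hc, ?_, hcwt⟩
    rintro rfl
    have hpos : 0 < (m - t) * n := Nat.mul_pos (Nat.sub_pos_of_lt htm) (hPn ▸ hPodd.pos)
    simp [hammingWt, hpos.ne] at hcwt

end CodeParameters

theorem stmt_10_general (g : ℕ) (hg : 1 ≤ g) (Q : ℕ) (hQodd : Odd Q)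
    (hQmod : (2 * g + 1) ∣ (Q + 1)) (s : ℕ) (g' : ℤ) (hg'1 : -(g : ℤ) ≤ g') (hg'2 : g' ≤ (g : ℤ))
    (r δ : ℕ) (hr : (r : ℤ) = (g : ℤ) + 1 - g') (hδ : (δ : ℤ) = (g : ℤ) + 1 + g')
    (t m : ℕ) (htm : t < m) (hm : m ≤ (Q ^ (2 * s) + 2 * g * Q ^ s) / (2 * g + 1))
    (F : Type*) [Field F] [Fintype F] [DecidableEq F] (hF : Fintype.card F = Q ^ (2 * s)) :
    (∃ C : Submodule F (Fin (m * (2 * g + 1)) → F),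
      Module.finrank F C = t * r + 1 ∧ IsLRC C r δ ∧
      ∀ c ∈ C, c ≠ 0 →
        ((m - t : ℕ) : ℤ) * (2 * (g : ℤ) + 1) + min 0 (2 * g' + 1) ≤ (hammingWt c : ℤ)) ∧
    (0 ≤ g' →
      ExistsOptimalLRC F (m * (2 * g + 1)) (t * r + 1) ((m - t) * (2 * g + 1)) r δ) := by
  have hn : Odd (2 * g + 1) := odd_two_mul_add_one g
  have hr₀ : 0 < r := by omega
  have hrδ : r + δ = 2 * g + 1 + 1 := by omega
  obtain ⟨P, y, x, hPn, hy, hx, hP⟩ :=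
    exists_polynomial_fibres hn (by omega) hQodd hQmod hF hm
  have hPodd : Odd P.natDegree := hPn ▸ hn
  have hdim : Module.finrank F (monomialCode x y (lrcExponents r t)) = t * r + 1 := by
    rw [finrank_monomialCode hx hy (lrcExponents_subset hr₀ (by omega) htm), card_lrcExponents]
  have hlrc : IsLRC (monomialCode x y (lrcExponents r t)) r δ :=
    isLRC_monomialCode hrδ hx (fst_lt_of_mem_lrcExponents hr₀)
  refine ⟨⟨_, hdim, hlrc, fun c hc hc₀ => ?_⟩, fun hg' => ⟨_, hdim, ?_, hlrc, ?_⟩⟩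
  · have hle := minDistGe_monomialCode_lrcExponents hPodd hPn hx hy hP r t c hc hc₀
    have hcast : ((m - t : ℕ) : ℤ) * (2 * (g : ℤ) + 1) = ((m - t) * (2 * g + 1) : ℕ) := by
      push_cast
      rfl
    omega
  · exact minDistEq_monomialCode_lrcExponents hPodd hPn hx hy hP hr₀ (by omega) htm
  · exact singletonOptimal_of_add_eq hr₀ hrδ htm.le

/-- For `g ≥ 2`, an odd prime power `Q ≡ -1 (mod 2g+1)`,
`q = Q^(2s)`, an integer `g'` with `-(g-1) ≤ g' ≤ g-1`, `r = g+1-g'`, `δ = g+1+g'`,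
and all `1 ≤ t < m ≤ ⌊(q + 2gQ^s)/(2g+1)⌋`, there exists an `(r, δ)`-LRC over `F_q`
of length `m(2g+1)`, dimension `tr+1`, and minimum distance at least
`(m-t)(2g+1) + min{0, 2g'+1}`; and if moreover `0 ≤ g'`, there exists an optimal
`(r, δ)`-LRC with parameters `[m(2g+1), tr+1, (m-t)(2g+1)]_q`. -/
theorem stmt_10 (g : ℕ) (hg : 2 ≤ g)
    (Q : ℕ) (hQ : IsPrimePow Q) (hQodd : Odd Q) (hQmod : (2 * g + 1) ∣ (Q + 1))
    (s : ℕ) (hs : 0 < s) (q : ℕ) (hq : q = Q ^ (2 * s))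
    (g' : ℤ) (hg'1 : -((g : ℤ) - 1) ≤ g') (hg'2 : g' ≤ (g : ℤ) - 1)
    (r δ : ℕ) (hr : (r : ℤ) = (g : ℤ) + 1 - g') (hδ : (δ : ℤ) = (g : ℤ) + 1 + g')
    (t m : ℕ) (ht : 1 ≤ t) (htm : t < m)
    (hm : m ≤ (q + 2 * g * Q ^ s) / (2 * g + 1))
    (F : Type*) [Field F] [Fintype F] [DecidableEq F] (hF : Fintype.card F = q) :
    (∃ C : Submodule F (Fin (m * (2 * g + 1)) → F),
      Module.finrank F C = t * r + 1 ∧ IsLRC C r δ ∧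
      ∀ c ∈ C, c ≠ 0 →
        ((m - t : ℕ) : ℤ) * (2 * (g : ℤ) + 1) + min 0 (2 * g' + 1) ≤ (hammingWt c : ℤ)) ∧
    (0 ≤ g' →
      ExistsOptimalLRC F (m * (2 * g + 1)) (t * r + 1) ((m - t) * (2 * g + 1)) r δ) := by
  subst hq
  exact stmt_10_general g (by omega) Q hQodd hQmod s g' (by omega) (by omega) r δ hr hδ t m htm hm F
    hF
end

section
/- Let Q be a prime power, s ≥ 2 an integer, q = Q^{s}, let b be a positive divisor of (Q^{s}−1)/(Q−1) with b < (Q^{s}−1)/(Q−1), and let c be a positive divisor of s with c < s. Set M = (Q^{s}−1)/(b(Q−1)) and N = Q^{s−c}, and assume M < N. Then for every integer b' with 0 ≤ b' ≤ ⌊(N−1)/M⌋ − 1, setting r = ⌊(N−1)/M⌋ + 1 − b' and δ = N + 1 − r, and for all integers t, m with 1 ≤ t < m ≤ (gcd(b, (Q^{c}−1)/(Q−1)) · (q−1)q/(bQ^{c}) + q/Q^{c})/N, there exists an optimal (r, δ)-LRC over F_q with parameters [mN, tr+1, (m−t)N]_q. -/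
/-!
The code evaluates polynomials `∑ p_j(x) y ^ j` at points of the norm-trace curve
`y ^ M = Tr(x)`, where `Tr` is the trace of `F` over its subfield `K` with `Q ^ c` elements. Every
value of `y` with `y ^ M ∈ K` carries a fibre of exactly `N` points; these fibres are the repair
groups, and on each of them a codeword is a Reed–Solomon word, namely a polynomial in `x` of degree
less than `r`.

For the minimum distance, give `x` weight `M` and `y` weight `N`. The coordinate ring of the curve
is a free `F[x]`-module with basis `1, y, …, y ^ (M - 1)`, and reduction modulo `y ^ M - Tr(x)` does
not raise the weight. Hence the norm to `F[x]` of a function `f` of weight at most `D` has degree at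
most `D`. That degree is the dimension of the coordinate ring modulo `f`, which bounds the number of
zeros of `f`. The message polynomials have weight at most `t * N`, and `∏ (y - y_i)` over `t` of the
fibres attains this bound.
-/

open Polynomial

section ZeroBound

theorem natDegree_det_mul_le {R ι : Type*} [CommRing R] [Fintype ι] [DecidableEq ι] {w D : ℕ}
    {A : Matrix ι ι R[X]} (u : ι → ℕ)
    (hA : ∀ i j, A i j ≠ 0 → (A i j).natDegree * w + u i ≤ D + u j) :
    A.det.natDegree * w ≤ Fintype.card ι * D := by
  have hprod (σ : Equiv.Perm ι) : (∏ i, A (σ i) i).natDegree * w ≤ Fintype.card ι * D := by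
    by_cases hσ : ∃ i, A (σ i) i = 0
    · obtain ⟨i, hi⟩ := hσ
      rw [Finset.prod_eq_zero (f := fun i => A (σ i) i) (Finset.mem_univ i) hi, natDegree_zero,
        zero_mul]
      exact Nat.zero_le _
    · push Not at hσ
      have hsum := Finset.sum_le_sum fun i (_ : i ∈ Finset.univ) => hA (σ i) i (hσ i)
      rw [Finset.sum_add_distrib, Finset.sum_add_distrib, ← Finset.sum_mul, Equiv.sum_comp σ u,
        Finset.sum_const, Finset.card_univ, smul_eq_mul] at hsum
      exact (Nat.mul_le_mul_right w (natDegree_prod_le _ _)).trans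
        (Nat.add_le_add_iff_right.mp hsum)
  rcases w.eq_zero_or_pos with rfl | hw
  · simp
  rw [← Nat.le_div_iff_mul_le hw, Matrix.det_apply]
  refine natDegree_sum_le_of_forall_le _ _ fun σ _ => (natDegree_smul_le _ _).trans ?_
  exact (Nat.le_div_iff_mul_le hw).mpr (hprod σ)

theorem finiteDimensional_quotient_span_singleton {F S ι : Type*} [Field F] [CommRing S]
    [IsDomain S] [Algebra F[X] S] [Algebra F S] [IsScalarTower F F[X] S] [Finite ι]
    (b : Module.Basis ι F[X] S) {f : S} (hf : f ≠ 0) :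
    FiniteDimensional F (S ⧸ Ideal.span {f}) := by
  have := Fintype.ofFinite ι
  exact Module.Finite.equiv
    (Ideal.quotientEquivDirectSum F b (Ideal.span_singleton_eq_bot.not.mpr hf)).symm

theorem card_le_finrank_quotient_of_le_ker {K R : Type*} [Field K] [CommRing R] [Algebra K R]
    {I : Ideal R} [FiniteDimensional K (R ⧸ I)] (s : Finset (R →ₐ[K] K))
    (hs : ∀ φ ∈ s, ∀ x ∈ I, φ x = 0) : s.card ≤ Module.finrank K (R ⧸ I) := by
  let toQuotient (φ : s) : R ⧸ I →ₐ[K] K := Ideal.Quotient.liftₐ I φ (hs φ φ.2)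
  have hinj : Function.Injective toQuotient := fun φ ψ h => Subtype.ext <| AlgHom.ext fun x =>
    DFunLike.congr_fun h (Ideal.Quotient.mk I x)
  calc s.card = Nat.card s := by simp
    _ ≤ Nat.card (R ⧸ I →ₐ[K] K) := Nat.card_le_card_of_injective _ hinj
    _ ≤ Module.finrank K (R ⧸ I) := card_algHom_le_finrank K (R ⧸ I) K

/-- The bivariate polynomials all of whose monomials `x ^ i * y ^ j` satisfy
`i * w₁ + j * w₂ ≤ D`, that is, of weighted degree at most `D`. Here `x` is the inner and `y`
the outer variable of `R[X][X]`. -/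
def weightedDegreeLE (R : Type*) [CommRing R] (w₁ w₂ D : ℕ) : Submodule R R[X][X] where
  carrier := {f | ∀ i j, (f.coeff j).coeff i ≠ 0 → i * w₁ + j * w₂ ≤ D}
  add_mem' {f g} hf hg i j h := by
    by_cases hi : (f.coeff j).coeff i = 0
    · exact hg i j fun h' => h (by simp [hi, h'])
    · exact hf i j hi
  zero_mem' i j h := by simp at h
  smul_mem' a f hf i j h := hf i j fun h' => h (by simp [h'])

theorem prime_X_pow_sub_C_of_coeff_one_ne_zero {R : Type*} [CommRing R] [IsDomain R]
    [UniqueFactorizationMonoid R] {M : ℕ} (hM : 0 < M) {L : R[X]}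
    (h0 : L.coeff 0 = 0) (h1 : L.coeff 1 ≠ 0) : Prime (X ^ M - C L : R[X][X]) := by
  have hmonic : (X ^ M - C L : R[X][X]).Monic := monic_X_pow_sub_C _ hM.ne'
  have hnd : (X ^ M - C L : R[X][X]).natDegree = M := natDegree_X_pow_sub_C
  have hprime : (Ideal.span {(X : R[X])}).IsPrime :=
    (Ideal.span_singleton_prime X_ne_zero).mpr prime_X
  have hL : L ∈ Ideal.span {(X : R[X])} := by
    rwa [Ideal.mem_span_singleton, X_dvd_iff]
  have hL2 : L ∉ Ideal.span {(X : R[X])} ^ 2 := by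
    rw [Ideal.span_singleton_pow, Ideal.mem_span_singleton, X_pow_dvd_iff]
    exact fun h => h1 (h 1 one_lt_two)
  refine (IsEisensteinAt.irreducible (𝓟 := Ideal.span {(X : R[X])}) ⟨?_, ?_, ?_⟩ hprime
    hmonic.isPrimitive (hnd.symm ▸ hM)).prime
  · rw [hmonic.leadingCoeff]
    exact fun h => hprime.ne_top ((Ideal.eq_top_iff_one _).mpr h)
  · intro n hn
    rw [hnd] at hn
    rw [coeff_sub, coeff_X_pow, if_neg hn.ne, zero_sub, coeff_C]
    split_ifs
    · exact neg_mem hL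
    · simp
  · simpa [hM.ne] using hL2

theorem X_pow_modByMonic_X_pow_sub_C {R : Type*} [CommRing R] {M : ℕ} (hM : 0 < M) (a : R)
    (n : ℕ) : X ^ n %ₘ (X ^ M - C a) = C (a ^ (n / M)) * X ^ (n % M) := by
  nontriviality R
  have hmonic : (X ^ M - C a).Monic := monic_X_pow_sub_C a hM.ne'
  have hdvd : X ^ M - C a ∣ X ^ n - C (a ^ (n / M)) * X ^ (n % M) := by
    have h := (sub_dvd_pow_sub_pow (X ^ M) (C a) (n / M)).mul_right (X ^ (n % M))
    rwa [sub_mul, ← pow_mul, ← pow_add, Nat.div_add_mod, ← C_pow] at h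
  obtain ⟨g, hg⟩ := hdvd
  refine (div_modByMonic_unique g _ hmonic ⟨by rw [← hg]; ring, ?_⟩).2
  rw [degree_X_pow_sub_C hM]
  exact (degree_C_mul_X_pow_le _ _).trans_lt (by exact_mod_cast Nat.mod_lt n hM)

theorem natDegree_coeff_mul_add_le_of_mem_weightedDegreeLE {R : Type*} [CommRing R]
    {w₁ w₂ D : ℕ} {f : R[X][X]} (hf : f ∈ weightedDegreeLE R w₁ w₂ D) {j : ℕ}
    (hj : f.coeff j ≠ 0) : (f.coeff j).natDegree * w₁ + j * w₂ ≤ D :=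
  hf _ _ (leadingCoeff_ne_zero.mpr hj)

theorem C_mul_X_pow_mem_weightedDegreeLE {R : Type*} [CommRing R] {w₁ w₂ D j : ℕ} {p : R[X]}
    (hp : p.natDegree * w₁ + j * w₂ ≤ D) : C p * X ^ j ∈ weightedDegreeLE R w₁ w₂ D := by
  intro i k hik
  rw [coeff_C_mul_X_pow] at hik
  split_ifs at hik with hk
  · subst hk
    exact le_trans (by gcongr; exact le_natDegree_of_ne_zero hik) hp
  · simp at hik

theorem mul_X_pow_mem_weightedDegreeLE {R : Type*} [CommRing R] {w₁ w₂ D : ℕ} {f : R[X][X]}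
    (hf : f ∈ weightedDegreeLE R w₁ w₂ D) (k : ℕ) :
    f * X ^ k ∈ weightedDegreeLE R w₁ w₂ (D + k * w₂) := by
  intro i j hij
  rw [coeff_mul_X_pow'] at hij
  split_ifs at hij with hk
  · obtain ⟨l, rfl⟩ := Nat.exists_eq_add_of_le' hk
    rw [Nat.add_sub_cancel] at hij
    linarith [hf i l hij]
  · simp at hij

theorem modByMonic_X_pow_sub_C_mem_weightedDegreeLE {R : Type*} [CommRing R] {M N D : ℕ}
    (hM : 0 < M) {L : R[X]} (hL : L.natDegree ≤ N) {f : R[X][X]}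
    (hf : f ∈ weightedDegreeLE R M N D) :
    f %ₘ (X ^ M - C L) ∈ weightedDegreeLE R M N D := by
  have hterm (j : ℕ) (p : R[X]) :
      (C p * X ^ j) %ₘ (X ^ M - C L) = C (p * L ^ (j / M)) * X ^ (j % M) := by
    rw [← smul_eq_C_mul, smul_modByMonic, X_pow_modByMonic_X_pow_sub_C hM, smul_eq_C_mul, C_mul,
      mul_assoc]
  rw [f.as_sum_support_C_mul_X_pow, ← modByMonicHom_apply, map_sum]
  refine Submodule.sum_mem _ fun j hj => ?_
  rw [modByMonicHom_apply, hterm]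
  refine C_mul_X_pow_mem_weightedDegreeLE ?_
  have hdeg : (f.coeff j * L ^ (j / M)).natDegree ≤ (f.coeff j).natDegree + j / M * N := by
    refine natDegree_mul_le.trans (Nat.add_le_add_left ?_ _)
    exact natDegree_pow_le.trans (Nat.mul_le_mul_left _ hL)
  calc (f.coeff j * L ^ (j / M)).natDegree * M + j % M * N
      ≤ ((f.coeff j).natDegree + j / M * N) * M + j % M * N := by gcongr
    _ = (f.coeff j).natDegree * M + (M * (j / M) + j % M) * N := by ring
    _ = (f.coeff j).natDegree * M + j * N := by rw [Nat.div_add_mod]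
    _ ≤ D := natDegree_coeff_mul_add_le_of_mem_weightedDegreeLE hf (mem_support_iff.mp hj)

theorem leftMulMatrix_powerBasisAux'_mk {R : Type*} [CommRing R] {g : R[X]} (hg : g.Monic)
    (f : R[X]) (i j : Fin g.natDegree) :
    Algebra.leftMulMatrix (AdjoinRoot.powerBasisAux' hg) (AdjoinRoot.mk g f) i j =
      ((f * X ^ (j : ℕ)) %ₘ g).coeff i := by
  have hbasis : AdjoinRoot.powerBasisAux' hg j = AdjoinRoot.mk g (X ^ (j : ℕ)) := by
    rw [map_pow]
    exact (AdjoinRoot.powerBasis' hg).basis_eq_pow j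
  rw [Algebra.leftMulMatrix_eq_repr_mul, hbasis, ← map_mul,
    AdjoinRoot.powerBasisAux'_repr_apply_to_fun, AdjoinRoot.modByMonicHom_mk]

theorem natDegree_norm_mk_le {R : Type*} [CommRing R] [Nontrivial R] {M N D : ℕ} (hM : 0 < M)
    {L : R[X]} (hL : L.natDegree ≤ N) {f : R[X][X]} (hf : f ∈ weightedDegreeLE R M N D) :
    (Algebra.norm R[X] (AdjoinRoot.mk (X ^ M - C L) f)).natDegree ≤ D := by
  have hmonic : (X ^ M - C L : R[X][X]).Monic := monic_X_pow_sub_C _ hM.ne'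
  have hdet := natDegree_det_mul_le (w := M) (D := D)
    (A := Algebra.leftMulMatrix (AdjoinRoot.powerBasisAux' hmonic) (AdjoinRoot.mk _ f))
    (fun i => i * N) fun i j hij => by
      rw [leftMulMatrix_powerBasisAux'_mk] at hij ⊢
      exact natDegree_coeff_mul_add_le_of_mem_weightedDegreeLE
        (modByMonic_X_pow_sub_C_mem_weightedDegreeLE hM hL
          (mul_X_pow_mem_weightedDegreeLE hf j)) hij
  rw [← Algebra.norm_eq_matrix_det, Fintype.card_fin, natDegree_X_pow_sub_C, mul_comm] at hdet
  exact Nat.le_of_mul_le_mul_left hdet hM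

variable {F : Type*} [Field F]

/-- Evaluation at a point `(x, y)` of the curve `y ^ M = L x`, on its coordinate ring. -/
noncomputable def evalOnCurve {M : ℕ} {L : F[X]} {x y : F} (h : y ^ M = L.eval x) :
    AdjoinRoot (X ^ M - C L) →ₐ[F] F :=
  AdjoinRoot.liftAlgHom _ (aeval x) y (by simp [h])

theorem evalOnCurve_mk {M : ℕ} {L : F[X]} {x y : F} (h : y ^ M = L.eval x) (f : F[X][X]) :
    evalOnCurve h (AdjoinRoot.mk _ f) = f.evalEval x y := by
  rw [evalOnCurve, AdjoinRoot.liftAlgHom_mk, ← eval₂_evalRingHom]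
  rfl

theorem card_filter_evalEval_eq_zero_le [DecidableEq F] {M N D : ℕ} (hM : 0 < M) {L : F[X]}
    (hL : L.natDegree ≤ N) (h0 : L.coeff 0 = 0) (h1 : L.coeff 1 ≠ 0) {f : F[X][X]}
    (hf : f ∈ weightedDegreeLE F M N D) {ι : Type*} [Fintype ι] {x y : ι → F}
    (hxy : Function.Injective fun i => (x i, y i)) (hcurve : ∀ i, y i ^ M = L.eval (x i))
    (hne : ∃ i, f.evalEval (x i) (y i) ≠ 0) :
    (Finset.univ.filter fun i => f.evalEval (x i) (y i) = 0).card ≤ D := by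
  classical
  have := AdjoinRoot.isDomain_of_prime (prime_X_pow_sub_C_of_coeff_one_ne_zero hM h0 h1)
  let basis := AdjoinRoot.powerBasisAux' (monic_X_pow_sub_C L hM.ne')
  have hmk : AdjoinRoot.mk (X ^ M - C L) f ≠ 0 := fun h => by
    obtain ⟨i, hi⟩ := hne
    exact hi (by rw [← evalOnCurve_mk (hcurve i), h, map_zero])
  have := finiteDimensional_quotient_span_singleton basis hmk
  have hinj : Function.Injective fun i => evalOnCurve (hcurve i) := fun i i' h => by
    have heval (g : F[X][X]) : g.evalEval (x i) (y i) = g.evalEval (x i') (y i') := by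
      simpa only [evalOnCurve_mk] using DFunLike.congr_fun h (AdjoinRoot.mk _ g)
    exact hxy (Prod.ext (by simpa [evalEval_C] using heval (C X)) (by simpa using heval X))
  calc (Finset.univ.filter fun i => f.evalEval (x i) (y i) = 0).card
      = ((Finset.univ.filter fun i => f.evalEval (x i) (y i) = 0).image
          fun i => evalOnCurve (hcurve i)).card := (Finset.card_image_of_injective _ hinj).symm
    _ ≤ Module.finrank F (_ ⧸ Ideal.span {AdjoinRoot.mk (X ^ M - C L) f}) := by
        refine card_le_finrank_quotient_of_le_ker _ fun φ hφ g hg => ?_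
        obtain ⟨i, hi, rfl⟩ := Finset.mem_image.mp hφ
        obtain ⟨h, rfl⟩ := Ideal.mem_span_singleton'.mp hg
        rw [map_mul, evalOnCurve_mk, (Finset.mem_filter_univ i).mp hi, mul_zero]
    _ = (Algebra.norm F[X] (AdjoinRoot.mk (X ^ M - C L) f)).natDegree :=
        finrank_quotient_span_eq_natDegree_norm basis hmk
    _ ≤ D := natDegree_norm_mk_le hM hL hf

end ZeroBound

section Code

variable {F : Type*} [Field F] {m N t r : ℕ}

/-- The message polynomials `∑ p_j(x) y ^ j` with `j ≤ t`, where `p_j` has degree less than `r` for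
`j < t` and `p_t` is constant. -/
def messageSpace (F : Type*) [Field F] (t r : ℕ) : Submodule F F[X][X] where
  carrier := {f | ∀ j, f.coeff j ∈ degreeLT F (if j < t then r else if j = t then 1 else 0)}
  add_mem' hf hg j := by rw [coeff_add]; exact add_mem (hf j) (hg j)
  zero_mem' j := by rw [coeff_zero]; exact zero_mem _
  smul_mem' a f hf j := by rw [coeff_smul]; exact Submodule.smul_mem _ a (hf j)

theorem coeff_eq_zero_of_mem_messageSpace {f : F[X][X]} (hf : f ∈ messageSpace F t r) {j : ℕ}
    (hj : t < j) : f.coeff j = 0 := by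
  simpa [hj.not_gt, hj.ne', mem_degreeLT] using hf j

theorem coeff_mem_degreeLT_of_mem_messageSpace (hr : 1 ≤ r) {f : F[X][X]}
    (hf : f ∈ messageSpace F t r) (j : ℕ) : f.coeff j ∈ degreeLT F r := by
  refine degreeLT_mono ?_ (hf j)
  split_ifs <;> omega

theorem eval_C_mem_degreeLT_of_mem_messageSpace (hr : 1 ≤ r) {f : F[X][X]}
    (hf : f ∈ messageSpace F t r) (b : F) : f.eval (C b) ∈ degreeLT F r := by
  rw [eval_eq_sum, sum_def]
  refine Submodule.sum_mem _ fun j _ => ?_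
  rw [← C_pow, mul_comm, ← smul_eq_C_mul]
  exact Submodule.smul_mem _ _ (coeff_mem_degreeLT_of_mem_messageSpace hr hf j)

theorem messageSpace_le_weightedDegreeLE {M : ℕ} (hM : (r - 1) * M ≤ N) :
    messageSpace F t r ≤ weightedDegreeLE F M N (t * N) := by
  intro f hf i j hij
  have hi := fun n hn => coeff_eq_zero_of_degree_lt
    ((mem_degreeLT.mp (hf j)).trans_le (Nat.cast_le.mpr hn : _ ≤ ((n : ℕ) : WithBot ℕ)))
  have hlt : i < if j < t then r else if j = t then 1 else 0 := by
    by_contra! h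
    exact hij (hi i h)
  split_ifs at hlt with hjt hjt'
  · calc i * M + j * N ≤ (r - 1) * M + j * N := by gcongr; omega
      _ ≤ (j + 1) * N := by linarith
      _ ≤ t * N := by gcongr; omega
  · simp [Nat.lt_one_iff.mp hlt, hjt']
  · simp at hlt

/-- A message polynomial is the tuple of its coefficients. -/
noncomputable def messageSpaceEquiv (F : Type*) [Field F] (t r : ℕ) :
    messageSpace F t r ≃ₗ[F] ∀ j : Fin (t + 1),
      degreeLT F (if (j : ℕ) < t then r else if (j : ℕ) = t then 1 else 0) :=
  LinearEquiv.ofBijective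
    { toFun f j := ⟨f.1.coeff j, f.2 j⟩
      map_add' f g := by ext; simp
      map_smul' a f := by ext; simp }
    (by
      constructor
      · intro f g hfg
        ext1
        ext1 j
        rcases lt_or_ge t j with hj | hj
        · rw [coeff_eq_zero_of_mem_messageSpace f.2 hj, coeff_eq_zero_of_mem_messageSpace g.2 hj]
        · exact congrArg Subtype.val (congrFun hfg ⟨j, Nat.lt_succ_of_le hj⟩)
      · intro p
        classical
        have hcoeff (j : Fin (t + 1)) : (ofFn (t + 1) fun j => (p j).1).coeff j = p j :=
          ofFn_coeff_eq_val_of_lt _ j.2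
        refine ⟨⟨ofFn (t + 1) fun j => (p j).1, fun j => ?_⟩, ?_⟩
        · rcases lt_or_ge j (t + 1) with hj | hj
          · exact hcoeff ⟨j, hj⟩ ▸ (p ⟨j, hj⟩).2
          · rw [ofFn_coeff_eq_zero_of_ge _ hj]
            exact zero_mem _
        · funext j
          exact Subtype.ext (hcoeff j))

theorem finrank_messageSpace : Module.finrank F (messageSpace F t r) = t * r + 1 := by
  have hfinrank (n : ℕ) : Module.finrank F (degreeLT F n) = n := by
    simp [(degreeLTEquiv F n).finrank_eq]
  have (n : ℕ) : FiniteDimensional F (degreeLT F n) := (degreeLTEquiv F n).symm.finiteDimensional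
  rw [(messageSpaceEquiv F t r).finrank_eq, Module.finrank_pi_fintype]
  simp only [hfinrank]
  simp [Fin.sum_univ_castSucc]

theorem map_C_mem_messageSpace (hr : 1 ≤ r) {p : F[X]} (hp : p.natDegree ≤ t) :
    p.map C ∈ messageSpace F t r := by
  intro j
  rw [coeff_map, mem_degreeLT]
  split_ifs with hlt heq
  · exact degree_C_le.trans_lt (by exact_mod_cast hr)
  · exact degree_C_le.trans_lt (by norm_num)
  · rw [coeff_eq_zero_of_natDegree_lt (by omega), C_0, degree_zero]
    exact WithBot.bot_lt_coe _

/-- The evaluation code map: the coordinates of a codeword form `m` blocks of length `N`, the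
`i`-th of which holds the values of the polynomial at the points `(x i j, y i)`. -/
noncomputable def evalBlocks (x : Fin m → Fin N → F) (y : Fin m → F) :
    F[X][X] →ₗ[F] (Fin (m * N) → F) :=
  LinearMap.pi fun k => (aevalAeval (x k.divNat k.modNat) (y k.divNat)).toLinearMap

variable {x : Fin m → Fin N → F} {y : Fin m → F}

theorem evalBlocks_finProdFinEquiv (f : F[X][X]) (i : Fin m) (j : Fin N) :
    evalBlocks x y f (finProdFinEquiv (i, j)) = f.evalEval (x i j) (y i) := by
  have h : ((finProdFinEquiv (i, j)).divNat, (finProdFinEquiv (i, j)).modNat) = (i, j) :=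
    finProdFinEquiv.symm_apply_apply (i, j)
  obtain ⟨hi, hj⟩ := Prod.mk.inj h
  rw [evalBlocks, LinearMap.pi_apply, hi, hj]
  exact congrFun (coe_aevalAeval_eq_evalEval _ _) f

theorem hammingWt_evalBlocks [DecidableEq F] (f : F[X][X]) :
    hammingWt (evalBlocks x y f) =
      (Finset.univ.filter fun p : Fin m × Fin N => f.evalEval (x p.1 p.2) (y p.1) ≠ 0).card := by
  refine (Finset.card_equiv finProdFinEquiv fun p => ?_).symm
  rw [Finset.mem_filter_univ, Finset.mem_filter_univ, evalBlocks_finProdFinEquiv]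

theorem eq_zero_of_evalBlocks_eq_zero (hr : 1 ≤ r) (hrN : r ≤ N) (htm : t < m)
    (hx : ∀ i, Function.Injective (x i)) (hy : Function.Injective y) {f : F[X][X]}
    (hf : f ∈ messageSpace F t r) (h : evalBlocks x y f = 0) : f = 0 := by
  have hblock (i : Fin m) : f.eval (C (y i)) = 0 := by
    refine eq_zero_of_degree_lt_of_eval_index_eq_zero Finset.univ (hx i).injOn ?_ ?_
    · rw [Finset.card_fin]
      exact (mem_degreeLT.mp (eval_C_mem_degreeLT_of_mem_messageSpace hr hf (y i))).trans_le
        (Nat.cast_le.mpr hrN)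
    · intro j _
      simpa using (evalBlocks_finProdFinEquiv f i j).symm.trans (congrFun h _)
  refine eq_zero_of_degree_lt_of_eval_index_eq_zero Finset.univ
    (C_injective.comp hy).injOn ?_ fun i _ => hblock i
  rw [Finset.card_fin, degree_lt_iff_coeff_zero]
  exact fun j hj => coeff_eq_zero_of_mem_messageSpace hf (htm.trans_le hj)

variable [DecidableEq F]

theorem le_card_filter_eval_ne_zero {ι : Type*} [Fintype ι] {p : F[X]} (hp : p ∈ degreeLT F r)
    (hp0 : p ≠ 0) {u : ι → F} (hu : Function.Injective u) :
    Fintype.card ι + 1 - r ≤ (Finset.univ.filter fun i => p.eval (u i) ≠ 0).card := by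
  have hzeros : (Finset.univ.filter fun i => p.eval (u i) = 0).card < r := by
    by_contra! h
    refine hp0 (eq_zero_of_degree_lt_of_eval_index_eq_zero _ hu.injOn
      ((mem_degreeLT.mp hp).trans_le (Nat.cast_le.mpr h)) fun i hi => ?_)
    exact (Finset.mem_filter_univ i).mp hi
  have hsplit := Finset.card_filter_add_card_filter_not (s := Finset.univ)
    fun i => p.eval (u i) = 0
  rw [Finset.card_univ] at hsplit
  simp only [ne_eq]
  omega

theorem isLRC_map_evalBlocks (hr : 1 ≤ r) (hrN : r ≤ N) (hx : ∀ i, Function.Injective (x i)) :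
    IsLRC ((messageSpace F t r).map (evalBlocks x y)) r (N + 1 - r) := by
  intro k
  obtain ⟨⟨i, j⟩, rfl⟩ := finProdFinEquiv.surjective k
  let block : Fin N ↪ Fin (m * N) :=
    ⟨fun j => finProdFinEquiv (i, j), fun j j' h => by simpa using h⟩
  refine ⟨Finset.univ.map block, Finset.mem_map_of_mem block (Finset.mem_univ j), ?_, ?_⟩
  · rw [Finset.card_map, Finset.card_fin]
    omega
  rintro _ ⟨f, hf, rfl⟩ ⟨k, hk, hne⟩
  have hblock (j : Fin N) : evalBlocks x y f (block j) = (f.eval (C (y i))).eval (x i j) :=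
    evalBlocks_finProdFinEquiv f i j
  obtain ⟨j, -, rfl⟩ := Finset.mem_map.mp hk
  rw [hblock] at hne
  have hcard := le_card_filter_eval_ne_zero (eval_C_mem_degreeLT_of_mem_messageSpace hr hf (y i))
    (fun h => hne (by rw [h, eval_zero])) (hx i)
  rw [Fintype.card_fin] at hcard
  rw [Finset.filter_map, Finset.card_map]
  simpa only [Function.comp_def, hblock] using hcard

theorem hammingWt_evalBlocks_map_C_prod (hy : Function.Injective y) (htm : t < m) :
    hammingWt (evalBlocks x y ((∏ i : Fin t, (X - C (y (Fin.castLE htm.le i)))).map C)) =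
      (m - t) * N := by
  have hsupport : (Finset.univ.filter fun p : Fin m × Fin N =>
      ((∏ i : Fin t, (X - C (y (Fin.castLE htm.le i)))).map C).evalEval (x p.1 p.2) (y p.1) ≠ 0) =
      Finset.Ici ⟨t, htm⟩ ×ˢ Finset.univ := by
    ext ⟨i, j⟩
    simp only [Finset.mem_filter_univ, Finset.mem_product, Finset.mem_univ, and_true,
      evalEval_map_C, eval_prod, eval_sub, eval_X, eval_C, Finset.prod_ne_zero_iff, sub_ne_zero,
      hy.ne_iff, forall_const, Finset.mem_Ici, Fin.le_def]
    constructor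
    · intro h
      by_contra! hi
      exact h ⟨i, hi⟩ rfl
    · rintro h i' rfl
      exact h.not_gt i'.2
  rw [hammingWt_evalBlocks, hsupport, Finset.card_product, Finset.card_fin, Fin.card_Ici]

theorem minDistGe_map_evalBlocks {M : ℕ} (hM : 0 < M) {L : F[X]} (hL : L.natDegree ≤ N)
    (h0 : L.coeff 0 = 0) (h1 : L.coeff 1 ≠ 0) (hcurve : ∀ i j, y i ^ M = L.eval (x i j))
    (hx : ∀ i, Function.Injective (x i)) (hy : Function.Injective y) (hrM : (r - 1) * M ≤ N) :
    MinDistGe ((messageSpace F t r).map (evalBlocks x y)) ((m - t) * N) := by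
  rintro _ ⟨f, hf, rfl⟩ hne
  obtain ⟨k, hk⟩ := Function.ne_iff.mp hne
  obtain ⟨⟨i₀, j₀⟩, rfl⟩ := finProdFinEquiv.surjective k
  rw [evalBlocks_finProdFinEquiv] at hk
  have hpoints : Function.Injective fun p : Fin m × Fin N => (x p.1 p.2, y p.1) := by
    rintro ⟨i, j⟩ ⟨i', j'⟩ h
    obtain ⟨hx', hy'⟩ := Prod.mk.inj h
    obtain rfl : i = i' := hy hy'
    exact congrArg (Prod.mk i) (hx i hx')
  have hzeros := card_filter_evalEval_eq_zero_le hM hL h0 h1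
    (messageSpace_le_weightedDegreeLE hrM hf) hpoints (fun p => hcurve p.1 p.2) ⟨(i₀, j₀), hk⟩
  have hsplit := Finset.card_filter_add_card_filter_not (s := Finset.univ)
    fun p : Fin m × Fin N => f.evalEval (x p.1 p.2) (y p.1) = 0
  rw [Finset.card_univ, Fintype.card_prod, Fintype.card_fin, Fintype.card_fin] at hsplit
  rw [hammingWt_evalBlocks, Nat.sub_mul, tsub_le_iff_left, ← hsplit]
  exact Nat.add_le_add_right hzeros _

theorem singletonOptimal_of_lt (hr : 1 ≤ r) (hrN : r ≤ N) (htm : t < m) :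
    SingletonOptimal (m * N) (t * r + 1) ((m - t) * N) r (N + 1 - r) := by
  have hceil : (t * r + 1 + r - 1) / r = t + 1 := by
    rw [show t * r + 1 + r - 1 = (t + 1) * r by rw [add_mul]; omega, Nat.mul_div_cancel _ hr]
  rw [SingletonOptimal, hceil]
  push_cast [htm.le, show r ≤ N + 1 by omega]
  ring

theorem existsOptimalLRC_of_curve {M : ℕ} (hM : 0 < M) {L : F[X]} (hL : L.natDegree ≤ N)
    (h0 : L.coeff 0 = 0) (h1 : L.coeff 1 ≠ 0) (hcurve : ∀ i j, y i ^ M = L.eval (x i j))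
    (hx : ∀ i, Function.Injective (x i)) (hy : Function.Injective y) (hr : 1 ≤ r)
    (hrM : (r - 1) * M < N) (htm : t < m) :
    ExistsOptimalLRC F (m * N) (t * r + 1) ((m - t) * N) r (N + 1 - r) := by
  have hrN : r ≤ N := by
    have := Nat.le_mul_of_pos_right (r - 1) hM
    omega
  have hinj : Function.Injective ((evalBlocks x y).domRestrict (messageSpace F t r)) := by
    rw [injective_iff_map_eq_zero]
    exact fun f hf => Subtype.ext (eq_zero_of_evalBlocks_eq_zero hr hrN htm hx hy f.2 hf)
  refine ⟨(messageSpace F t r).map (evalBlocks x y), ?_, ⟨?_, ?_⟩, ?_, ?_⟩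
  · rw [← LinearMap.range_domRestrict, LinearMap.finrank_range_of_inj hinj, finrank_messageSpace]
  · exact minDistGe_map_evalBlocks hM hL h0 h1 hcurve hx hy hrM.le
  · have hwt := hammingWt_evalBlocks_map_C_prod (x := x) hy htm
    refine ⟨_, Submodule.mem_map_of_mem (map_C_mem_messageSpace hr ?_), ?_, hwt⟩
    · simp
    · intro h
      have hzero : (m - t) * N = 0 := by
        rw [← hwt, h]
        simp [hammingWt]
      exact (Nat.mul_pos (Nat.sub_pos_of_lt htm) (hr.trans hrN)).ne' hzero
  · exact isLRC_map_evalBlocks hr hrN hx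
  · exact singletonOptimal_of_lt hr hrN htm

end Code

section Trace

variable (K F : Type*) [Field K] [Field F] [Algebra K F]

/-- The polynomial `∑ X ^ (|K| ^ i)`, `0 ≤ i < [F : K]`, which represents the trace of `F` over
`K`. -/
noncomputable def tracePolynomial : F[X] :=
  ∑ i ∈ Finset.range (Module.finrank K F), X ^ Nat.card K ^ i

variable [Finite F]

theorem eval_tracePolynomial (x : F) :
    (tracePolynomial K F).eval x = algebraMap K F (Algebra.trace K F x) := by
  simp [tracePolynomial, eval_finsetSum, FiniteField.algebraMap_trace_eq_sum_pow]

theorem coeff_zero_tracePolynomial : (tracePolynomial K F).coeff 0 = 0 := by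
  rw [coeff_zero_eq_eval_zero, eval_tracePolynomial, map_zero, map_zero]

theorem coeff_one_tracePolynomial : (tracePolynomial K F).coeff 1 = 1 := by
  have : Finite K := .of_injective _ (algebraMap K F).injective
  have hK : Nat.card K ≠ 1 := Finite.one_lt_card.ne'
  rw [tracePolynomial, finsetSum_coeff, Finset.sum_eq_single 0]
  · simp
  · intro i _ hi
    rw [coeff_X_pow, if_neg (by rw [eq_comm, Nat.pow_eq_one]; tauto)]
  · intro h
    exact absurd (Finset.mem_range.mpr Module.finrank_pos) h

theorem natDegree_tracePolynomial_mul_card_le :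
    (tracePolynomial K F).natDegree * Nat.card K ≤ Nat.card F := by
  have : Finite K := .of_injective _ (algebraMap K F).injective
  rw [← Nat.le_div_iff_mul_le Nat.card_pos]
  refine natDegree_sum_le_of_forall_le _ _ fun i hi => ?_
  rw [natDegree_X_pow, Nat.le_div_iff_mul_le Nat.card_pos, ← pow_succ,
    Module.natCard_eq_pow_finrank (K := K) (V := F)]
  exact Nat.pow_le_pow_right Nat.card_pos (Finset.mem_range.mp hi)

theorem card_fiber_trace_mul_card (z : K) :
    Nat.card {x : F // Algebra.trace K F x = z} * Nat.card K = Nat.card F := by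
  classical
  have : Finite K := .of_injective _ (algebraMap K F).injective
  have := Fintype.ofFinite K
  have := Fintype.ofFinite F
  have hrange (w : K) : w ∈ Set.range (Algebra.trace K F) := Algebra.trace_surjective K F w
  have hsum := Finset.card_eq_sum_card_fiberwise (s := Finset.univ) (t := Finset.univ)
    (f := Algebra.trace K F) fun _ _ => Finset.mem_univ _
  rw [Finset.sum_congr rfl fun w _ =>
    AddMonoidHom.card_fiber_eq_of_mem_range (Algebra.trace K F) (hrange w) (hrange z)] at hsum
  simpa [Fintype.card_subtype, mul_comm] using hsum.symm

variable {K F}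

theorem mem_range_algebraMap_of_pow_card_eq_self {z : F} (hz : z ^ Nat.card K = z) :
    z ∈ Set.range (algebraMap K F) := by
  have : Finite K := .of_injective _ (algebraMap K F).injective
  have := Fintype.ofFinite K
  rw [IsGalois.mem_range_algebraMap_iff_fixed]
  intro g
  obtain ⟨n, rfl⟩ := (FiniteField.bijective_frobeniusAlgEquivOfAlgebraic_pow K F).surjective g
  have hfrob : FiniteField.frobeniusAlgEquivOfAlgebraic K F ∈ MulAction.stabilizer Gal(F/K) z := by
    simpa [← Nat.card_eq_fintype_card] using hz
  exact pow_mem hfrob n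

theorem exists_injective_pow_mem_range_algebraMap {M m : ℕ} (hM : 0 < M)
    (hm : m ≤ (Nat.card F - 1).gcd (M * (Nat.card K - 1)) + 1) :
    ∃ y : Fin m → F, Function.Injective y ∧ ∀ i, y i ^ M ∈ Set.range (algebraMap K F) := by
  have : Finite K := .of_injective _ (algebraMap K F).injective
  let G := (powMonoidHom (M * (Nat.card K - 1)) : Fˣ →* Fˣ).ker
  have := Fintype.ofFinite G
  have hcard : Fintype.card (Fin m) ≤ Fintype.card (Option G) := by
    rwa [Fintype.card_fin, Fintype.card_option, ← Nat.card_eq_fintype_card,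
      IsCyclic.card_powMonoidHom_ker, Nat.card_units]
  obtain ⟨e⟩ := Function.Embedding.nonempty_of_card_le hcard
  let f (o : Option G) : F := o.elim 0 fun u => ((u : Fˣ) : F)
  have hf : Function.Injective f := by
    rintro (_ | u) (_ | v) h
    · rfl
    · exact absurd h.symm v.1.ne_zero
    · exact absurd h u.1.ne_zero
    · exact congrArg some (Subtype.ext (Units.ext h))
  have hrange (o : Option G) : f o ^ M ∈ Set.range (algebraMap K F) := by
    rcases o with _ | u
    · exact ⟨0, by rw [map_zero]; exact (zero_pow hM.ne').symm⟩
    · have hu : (u : Fˣ) ^ (M * (Nat.card K - 1)) = 1 := u.2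
      refine mem_range_algebraMap_of_pow_card_eq_self (K := K) (z := ((u : Fˣ) : F) ^ M) ?_
      rw [← Nat.sub_add_cancel (Nat.card_pos (α := K)), pow_succ, ← pow_mul,
        ← Units.val_pow_eq_pow_val, hu, Units.val_one, one_mul]
  exact ⟨f ∘ e, hf.comp e.injective, fun i => hrange (e i)⟩

theorem existsOptimalLRC_of_normTrace [DecidableEq F] {M N m t r : ℕ} (hM : 0 < M)
    (hN : N * Nat.card K = Nat.card F) (hm : m ≤ (Nat.card F - 1).gcd (M * (Nat.card K - 1)) + 1)
    (hr : 1 ≤ r) (hrM : (r - 1) * M < N) (htm : t < m) :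
    ExistsOptimalLRC F (m * N) (t * r + 1) ((m - t) * N) r (N + 1 - r) := by
  have : Finite K := .of_injective _ (algebraMap K F).injective
  obtain ⟨y, hy, hrange⟩ := exists_injective_pow_mem_range_algebraMap (K := K) hM hm
  choose z hz using hrange
  have hfiber (i : Fin m) : Nat.card {x : F // Algebra.trace K F x = z i} = N :=
    Nat.eq_of_mul_eq_mul_right Nat.card_pos ((card_fiber_trace_mul_card K F (z i)).trans hN.symm)
  let x (i : Fin m) : Fin N → F := Subtype.val ∘ (Finite.equivFinOfCardEq (hfiber i)).symm
  refine existsOptimalLRC_of_curve (x := x) hM ?_ (coeff_zero_tracePolynomial K F) ?_ ?_ ?_ hy hr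
    hrM htm
  · exact Nat.le_of_mul_le_mul_right
      ((natDegree_tracePolynomial_mul_card_le K F).trans_eq hN.symm) Nat.card_pos
  · simp [coeff_one_tracePolynomial]
  · intro i j
    rw [eval_tracePolynomial, ← hz i]
    exact congrArg _ ((Finite.equivFinOfCardEq (hfiber i)).symm j).2.symm
  · exact fun i => Subtype.val_injective.comp (Equiv.injective _)

end Trace

theorem exists_subfield_natCard_eq_pow {F : Type*} [Field F] [Finite F] {Q s c : ℕ}
    (hQ : IsPrimePow Q) (hF : Nat.card F = Q ^ s) (hc : c ≠ 0) (hcs : c ∣ s) :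
    ∃ K : Subfield F, Nat.card K = Q ^ c := by
  obtain ⟨p, e, hp, he, rfl⟩ := hQ
  have : Fact p.Prime := ⟨hp.nat_prime⟩
  rw [← pow_mul] at hF
  have := Fintype.ofFinite F
  have : CharP F p := charP_of_card_eq_prime_pow (Nat.card_eq_fintype_card.symm.trans hF)
  let := ZMod.algebra F p
  have hrank : Module.finrank (ZMod p) F = e * s := by
    refine Nat.pow_right_injective hp.nat_prime.two_le ?_
    simpa only [Nat.card_zmod] using (Module.natCard_eq_pow_finrank (K := ZMod p)).symm.trans hF
  have hec : e * c ≠ 0 := mul_ne_zero he.ne' hc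
  have hdvd : Module.finrank (ZMod p) (GaloisField p (e * c)) ∣ Module.finrank (ZMod p) F := by
    rw [GaloisField.finrank p hec, hrank]
    exact mul_dvd_mul_left e hcs
  obtain ⟨f⟩ := FiniteField.nonempty_algHom_of_finrank_dvd hdvd
  refine ⟨f.toRingHom.fieldRange, ?_⟩
  rw [← pow_mul, ← GaloisField.card p _ hec]
  exact (Nat.card_congr (Equiv.ofInjective f f.injective)).symm

theorem gcd_mul_pow_sub_one {Q : ℕ} (hQ : 1 < Q) (b c M : ℕ) :
    (b * (Q - 1) * M).gcd (M * (Q ^ c - 1)) =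
      b.gcd ((Q ^ c - 1) / (Q - 1)) * ((Q - 1) * M) := by
  obtain ⟨k, hk⟩ := Nat.sub_one_dvd_pow_sub_one Q c
  rw [hk, Nat.mul_div_cancel_left k (Nat.sub_pos_of_lt hQ), ← Nat.gcd_mul_right]
  congr 1 <;> ring

theorem blockBound_eq {k : Type*} [Field k] {g b P M N R q : k} (hb : b ≠ 0) (hN : N ≠ 0)
    (hR : R ≠ 0) (hq : q = N * R) (hq' : q - 1 = b * P * M) :
    (g * (q - 1) * q / (b * R) + q / R) / N = g * (P * M) + 1 := by
  rw [hq', hq]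
  field_simp

theorem le_gcd_add_one_of_le_blockBound {Q q b c M N m : ℕ} (hQ : 1 < Q) (hb : 0 < b) (hN : 0 < N)
    (hq : q = N * Q ^ c) (hq' : q - 1 = b * (Q - 1) * M)
    (hm : (m : ℚ) ≤ ((Nat.gcd b ((Q ^ c - 1) / (Q - 1)) : ℚ) * ((q : ℚ) - 1) * (q : ℚ)
        / ((b : ℚ) * (Q : ℚ) ^ c) + (q : ℚ) / (Q : ℚ) ^ c) / (N : ℚ)) :
    m ≤ (q - 1).gcd (M * (Q ^ c - 1)) + 1 := by
  have hq0 : 0 < q := hq ▸ Nat.mul_pos hN (Nat.pow_pos (by lia))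
  have hcast : (q : ℚ) - 1 = b * ((Q - 1 : ℕ) : ℚ) * M := by
    rw [← Nat.cast_pred hq0, hq', Nat.cast_mul, Nat.cast_mul]
  rw [blockBound_eq (by positivity) (by positivity) (by positivity)
    (by exact_mod_cast hq) hcast] at hm
  rw [hq', gcd_mul_pow_sub_one hQ]
  exact_mod_cast hm

/-- Let `q = Q^s` (`Q` a prime power, `s ≥ 2`), `b` a proper
positive divisor of `(Q^s-1)/(Q-1)`, `c` a proper positive divisor of `s`,
`M = (Q^s-1)/(b(Q-1))`, `N = Q^(s-c)` with `M < N`. For `0 ≤ b' ≤ ⌊(N-1)/M⌋ - 1`,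
`r = ⌊(N-1)/M⌋ + 1 - b'`, `δ = N + 1 - r`, and all
`1 ≤ t < m ≤ (gcd(b, (Q^c-1)/(Q-1))·(q-1)q/(bQ^c) + q/Q^c)/N`, there exists an
optimal `(r, δ)`-LRC with parameters `[mN, tr+1, (m-t)N]_q`. -/
theorem stmt_11 (Q : ℕ) (hQ : IsPrimePow Q) (s : ℕ) (hs : 2 ≤ s)
    (q : ℕ) (hq : q = Q ^ s)
    (b : ℕ) (hb : 0 < b) (hbdvd : b ∣ (Q ^ s - 1) / (Q - 1))
    (hblt : b < (Q ^ s - 1) / (Q - 1))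
    (c : ℕ) (hc : 0 < c) (hcdvd : c ∣ s) (hclt : c < s)
    (M N : ℕ) (hM : M = (Q ^ s - 1) / (b * (Q - 1))) (hN : N = Q ^ (s - c))
    (hMN : M < N)
    (b' : ℕ) (hb' : b' ≤ (N - 1) / M - 1)
    (r δ : ℕ) (hr : r = (N - 1) / M + 1 - b') (hδ : δ = N + 1 - r)
    (t m : ℕ) (ht : 1 ≤ t) (htm : t < m)
    (hm : (m : ℚ) ≤ ((Nat.gcd b ((Q ^ c - 1) / (Q - 1)) : ℚ) * ((q : ℚ) - 1) * (q : ℚ)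
        / ((b : ℚ) * (Q : ℚ) ^ c) + (q : ℚ) / (Q : ℚ) ^ c) / (N : ℚ))
    (F : Type*) [Field F] [Fintype F] [DecidableEq F] (hF : Fintype.card F = q) :
    ExistsOptimalLRC F (m * N) (t * r + 1) ((m - t) * N) r δ := by
  have hN0 : 0 < N := by lia
  have hqN : q = N * Q ^ c := by rw [hq, hN, ← pow_add, Nat.sub_add_cancel hclt.le]
  have hqM : q - 1 = b * (Q - 1) * M := by
    have hdvd := Nat.mul_dvd_mul_right hbdvd (Q - 1)
    rw [Nat.div_mul_cancel (Nat.sub_one_dvd_pow_sub_one Q s)] at hdvd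
    rw [hq, hM, Nat.mul_div_cancel' hdvd]
  have hM0 : 0 < M := by
    have hq1 : 0 < q - 1 := Nat.sub_pos_of_lt (hq ▸ Nat.one_lt_pow (by lia) hQ.one_lt)
    exact Nat.pos_of_mul_pos_left (hqM ▸ hq1)
  have hrM : (r - 1) * M < N := by
    have hr1 : r - 1 ≤ (N - 1) / M := by lia
    have := (Nat.mul_le_mul_right M hr1).trans (Nat.div_mul_le_self _ _)
    lia
  rw [← Nat.card_eq_fintype_card] at hF
  obtain ⟨K, hK⟩ := exists_subfield_natCard_eq_pow hQ (hF.trans hq) hc.ne' hcdvd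
  rw [hδ]
  refine existsOptimalLRC_of_normTrace (K := K) hM0 (by rw [hK, hF, hqN]) ?_ (by lia) hrM htm
  rw [hF, hK]
  exact le_gcd_add_one_of_le_blockBound hQ.one_lt hb hN0 hqN hqM hm
end
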